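/- arXiv:math-ph/9904013 — 2 statements merged into one kernel-verified Lean document; each statement's English description precedes it below -/
import Mathlib

section
/- Let n ≥ 4 be an integer and let h be the admissible corrector. Then there exists a constant λ' ∈ ℝ such that z^{δ'−2}(h(z) − λ₀ z^{2−δ}) → λ' as z → ∞, where δ' = (√(4nδ(δ+1)+1) − 1)/2 if n ≤ 5 and δ' = 2δ + 1 if n ≥ 6. -/
noncomputable def kap : ℝ := 1 / Real.sqrt Real.pi

noncomputable def kap3 : ℝ := -kap / 12

noncomputable def gam (n : ℕ) : ℝ := 1 / (2 * (n : ℝ) + 1)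

noncomputable def eps (n : ℕ) : ℝ := 1 / ((n : ℝ) - 1)

noncomputable def alph (n : ℕ) : ℝ := 1 / 2 - gam n

noncomputable def del (n : ℕ) : ℝ := ((n : ℝ) + 2) / ((n : ℝ) - 1)

noncomputable def lam (n : ℕ) : ℝ :=
  (del n * (del n + 1) / (2 * kap) ^ n) ^ (1 / ((n : ℝ) - 1))

noncomputable def lam0 (n : ℕ) : ℝ :=
  (lam n / (2 * kap)) *
    (-2 * (n : ℝ) * kap3 * del n * (del n + 1) - kap * (del n - 2 * eps n)) /
    (((n : ℝ) - 1) * del n * (del n + 1) + 2 * (2 * del n - 1))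

def IsReactiveProfile (n : ℕ) (η : ℝ → ℝ) : Prop :=
  ContDiffOn ℝ 2 η (Set.Ici 0) ∧
  (∀ z ∈ Set.Ici (0:ℝ), 0 < η z) ∧
  (∀ z ∈ Set.Ici (0:ℝ),
    derivWithin (derivWithin η (Set.Ici 0)) (Set.Ici 0) z
      = (2 * kap * z * η z + (η z) ^ 2) ^ n) ∧
  derivWithin η (Set.Ici 0) 0 = -kap ∧
  Filter.Tendsto η Filter.atTop (nhds 0)

/-- The corrector h: C² on [0,∞), satisfies
h'' + γη + αzη' = n(2κzη+η²)^{n−1}((2κz+2η)h + 2κ₃z³η), h'(0) = 0,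
h(z) − λ₀ z^{2−δ} → 0 as z → ∞. -/
def IsCorrector (n : ℕ) (η h : ℝ → ℝ) : Prop :=
  ContDiffOn ℝ 2 h (Set.Ici 0) ∧
  (∀ z ∈ Set.Ici (0:ℝ),
    derivWithin (derivWithin h (Set.Ici 0)) (Set.Ici 0) z + gam n * η z
        + alph n * z * derivWithin η (Set.Ici 0) z
      = (n : ℝ) * (2 * kap * z * η z + (η z) ^ 2) ^ (n - 1)
          * ((2 * kap * z + 2 * η z) * h z + 2 * kap3 * z ^ 3 * η z)) ∧
  derivWithin h (Set.Ici 0) 0 = 0 ∧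
  Filter.Tendsto (fun z : ℝ => h z - lam0 n * z ^ (2 - del n)) Filter.atTop (nhds 0)

noncomputable def delp (n : ℕ) : ℝ :=
  if n ≤ 5 then (Real.sqrt (4 * (n : ℝ) * del n * (del n + 1) + 1) - 1) / 2
  else 2 * del n + 1

open Filter Topology Set

lemma aux_max_principle (Z : ℝ) (u u1 u2 : ℝ → ℝ)
    (h1 : ∀ z ≥ Z, HasDerivAt u (u1 z) z) (h2 : ∀ z ≥ Z, HasDerivAt u1 (u2 z) z)
    (hZ : 0 ≤ u Z) (hlim : Tendsto u atTop (𝓝 0))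
    (hneg : ∀ z > Z, u z < 0 → u2 z < 0) : ∀ z ≥ Z, 0 ≤ u z := by
  intro z1 hz1
  by_contra hcon
  push Not at hcon
  obtain ⟨R, hR⟩ := eventually_atTop.1 ((hlim.eventually (lt_mem_nhds hcon)))
  have hcont : ContinuousOn u (Icc Z (max R z1)) := fun x hx =>
    (h1 x hx.1).continuousAt.continuousWithinAt
  obtain ⟨x, hx, hmin⟩ := isCompact_Icc.exists_isMinOn
    (⟨z1, hz1, le_max_right _ _⟩ : (Icc Z (max R z1)).Nonempty) hcont
  have hx1 : u x ≤ u z1 := hmin ⟨hz1, le_max_right _ _⟩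
  have hall : ∀ y ≥ Z, u x ≤ u y := by
    intro y hy
    rcases le_total y (max R z1) with hy2 | hy2
    · exact hmin ⟨hy, hy2⟩
    · exact hx1.trans (hR y ((le_max_left _ _).trans hy2)).le
  have hxZ : Z < x := by
    rcases eq_or_lt_of_le hx.1 with h | h
    · rw [← h] at hx1; linarith
    · exact h
  have hloc : IsLocalMin u x := by
    filter_upwards [lt_mem_nhds hxZ] with y hy using hall y hy.le
  have hd0 : u1 x = 0 := hloc.hasDerivAt_eq_zero (h1 x hxZ.le)
  have hd2 : u2 x < 0 := hneg x hxZ (by linarith)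
  have hs := (hasDerivAt_iff_tendsto_slope.1 (h2 x hxZ.le)).eventually (gt_mem_nhds hd2)
  have hs' : ∀ᶠ y in 𝓝[>] x, slope u1 x y < 0 :=
    hs.filter_mono (nhdsWithin_mono x (fun y hy => ne_of_gt hy))
  obtain ⟨e, he, hes⟩ := (mem_nhdsGT_iff_exists_Ioo_subset).1 hs'
  have he' : x < e := he
  obtain ⟨c, hc, hce⟩ := exists_hasDerivAt_eq_slope u u1 (show x < (x + e) / 2 by linarith)
    (fun y hy => (h1 y (by linarith [hy.1])).continuousAt.continuousWithinAt)
    (fun y hy => h1 y (by linarith [hy.1]))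
  have hcs : slope u1 x c < 0 := hes ⟨hc.1, by linarith [hc.2]⟩
  rw [slope_def_field, hd0, sub_zero] at hcs
  have hc1 : u1 c < 0 := by
    by_contra hh
    push Not at hh
    have := div_nonneg hh (sub_nonneg.2 hc.1.le)
    linarith
  rw [hce] at hc1
  have h3 : 0 ≤ (u ((x + e) / 2) - u x) / ((x + e) / 2 - x) :=
    div_nonneg (sub_nonneg.2 (hall _ (by linarith))) (by linarith)
  linarith

lemma aux_pow_d1 (p z : ℝ) (hz : 0 < z) :
    HasDerivAt (fun t : ℝ => t ^ p) (p * z ^ (p - 1)) z :=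
  Real.hasDerivAt_rpow_const (Or.inl hz.ne')

lemma aux_pow_d2 (p z : ℝ) (hz : 0 < z) :
    HasDerivAt (fun t : ℝ => p * t ^ (p - 1)) (p * (p - 1) * z ^ (p - 2)) z := by
  have := (Real.hasDerivAt_rpow_const (p := p - 1) (Or.inl hz.ne')).const_mul p
  refine this.congr_deriv ?_
  rw [show p - 1 - 1 = p - 2 by ring]; ring

lemma aux_rpow_neg_two (p z : ℝ) (hz : 0 < z) : z ^ (p - 2) = z ^ p / z ^ 2 := by
  rw [Real.rpow_sub hz]; norm_num

lemma aux_neg_pow_tendsto (q : ℝ) (hq : 0 < q) :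
    Tendsto (fun z : ℝ => z ^ (-q)) atTop (𝓝 0) := tendsto_rpow_neg_atTop hq

/-- basic comparison for the Euler equation -/
lemma aux_upper (μ q e C Z : ℝ) (hμ : 0 < μ) (hq : 0 < q) (hZ : 0 < Z)
    (w w1 w2 g : ℝ → ℝ)
    (h1 : ∀ z ≥ Z, HasDerivAt w (w1 z) z) (h2 : ∀ z ≥ Z, HasDerivAt w1 (w2 z) z)
    (hw : ∀ z ≥ Z, w2 z = μ * (μ + 1) * (w z / z ^ 2) + g z)
    (hg : ∀ z ≥ Z, -g z ≤ e * (μ * (μ + 1) - q * (q + 1)) * z ^ (-q - 2))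
    (hlim : Tendsto w atTop (𝓝 0))
    (hwZ : w Z ≤ e * Z ^ (-q) + C * Z ^ (-μ)) :
    ∀ z ≥ Z, w z ≤ e * z ^ (-q) + C * z ^ (-μ) := by
  have key := aux_max_principle Z (fun z => e * z ^ (-q) + C * z ^ (-μ) - w z)
    (fun z => e * (-q * z ^ (-q - 1)) + C * (-μ * z ^ (-μ - 1)) - w1 z)
    (fun z => e * (-q * (-q - 1) * z ^ (-q - 2)) + C * (-μ * (-μ - 1) * z ^ (-μ - 2)) - w2 z)
    (fun z hz => (((aux_pow_d1 (-q) z (by linarith)).const_mul e).add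
      ((aux_pow_d1 (-μ) z (by linarith)).const_mul C)).sub (h1 z hz))
    (fun z hz => (((aux_pow_d2 (-q) z (by linarith)).const_mul e).add
      ((aux_pow_d2 (-μ) z (by linarith)).const_mul C)).sub (h2 z hz))
    (by linarith)
    (by
      have := (((aux_neg_pow_tendsto q hq).const_mul e).add
        ((aux_neg_pow_tendsto μ hμ).const_mul C)).sub hlim
      simpa using this)
    (by
      intro z hz hneg
      have hz0 : 0 < z := by linarith
      have a1 := hw z hz.le
      have a2 := hg z hz.le
      rw [a1, aux_rpow_neg_two _ z hz0, aux_rpow_neg_two _ z hz0]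
      rw [aux_rpow_neg_two _ z hz0] at a2
      have hz2 : 0 < z ^ 2 := by positivity
      have a3 : μ * (μ + 1) * ((e * z ^ (-q) + C * z ^ (-μ) - w z) / z ^ 2) < 0 :=
        mul_neg_of_pos_of_neg (by positivity) (div_neg_of_neg_of_pos hneg hz2)
      have a4 : e * (-q * (-q - 1) * (z ^ (-q) / z ^ 2)) + C * (-μ * (-μ - 1) * (z ^ (-μ) / z ^ 2))
          - (μ * (μ + 1) * (w z / z ^ 2) + g z)
          = μ * (μ + 1) * ((e * z ^ (-q) + C * z ^ (-μ) - w z) / z ^ 2)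
            + (-g z - e * (μ * (μ + 1) - q * (q + 1)) * (z ^ (-q) / z ^ 2)) := by ring
      rw [a4]; linarith)
  intro z hz
  have := key z hz
  linarith

/-- two-sided version -/
lemma aux_two (μ q e C Z : ℝ) (hμ : 0 < μ) (hq : 0 < q) (hZ : 0 < Z)
    (w w1 w2 g : ℝ → ℝ)
    (h1 : ∀ z ≥ Z, HasDerivAt w (w1 z) z) (h2 : ∀ z ≥ Z, HasDerivAt w1 (w2 z) z)
    (hw : ∀ z ≥ Z, w2 z = μ * (μ + 1) * (w z / z ^ 2) + g z)
    (hg : ∀ z ≥ Z, |g z| ≤ e * (μ * (μ + 1) - q * (q + 1)) * z ^ (-q - 2))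
    (hlim : Tendsto w atTop (𝓝 0))
    (hwZ : |w Z| ≤ e * Z ^ (-q) + C * Z ^ (-μ)) :
    ∀ z ≥ Z, |w z| ≤ e * z ^ (-q) + C * z ^ (-μ) := by
  have b1 := aux_upper μ q e C Z hμ hq hZ w w1 w2 g h1 h2 hw
    (fun z hz => (neg_le_abs _).trans (hg z hz)) hlim ((le_abs_self _).trans hwZ)
  have b2 := aux_upper μ q e C Z hμ hq hZ (fun z => -w z) (fun z => -w1 z) (fun z => -w2 z)
    (fun z => -g z) (fun z hz => (h1 z hz).neg) (fun z hz => (h2 z hz).neg)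
    (fun z hz => by simp only [hw z hz]; ring)
    (fun z hz => by simpa using (le_abs_self _).trans (hg z hz))
    (by simpa using hlim.neg) ((neg_le_abs _).trans hwZ)
  intro z hz
  exact abs_le.2 ⟨by linarith [b2 z hz], b1 z hz⟩

/-- big-O version -/
lemma aux_bigO (μ q K Z : ℝ) (hμ : 0 < μ) (hq : 0 < q) (hqμ : q < μ) (hZ : 0 < Z)
    (w w1 w2 g : ℝ → ℝ)
    (h1 : ∀ z ≥ Z, HasDerivAt w (w1 z) z) (h2 : ∀ z ≥ Z, HasDerivAt w1 (w2 z) z)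
    (hw : ∀ z ≥ Z, w2 z = μ * (μ + 1) * (w z / z ^ 2) + g z)
    (hg : ∀ z ≥ Z, |g z| ≤ K * z ^ (-q - 2))
    (hlim : Tendsto w atTop (𝓝 0)) :
    ∃ M, ∀ z ≥ Z, |w z| ≤ M * z ^ (-q) := by
  have hd : 0 < μ * (μ + 1) - q * (q + 1) := by nlinarith
  have hZq : 0 < Z ^ (-q) := Real.rpow_pos_of_pos hZ _
  refine ⟨max (K / (μ * (μ + 1) - q * (q + 1))) (|w Z| / Z ^ (-q)), ?_⟩
  have := aux_two μ q (max (K / (μ * (μ + 1) - q * (q + 1))) (|w Z| / Z ^ (-q))) 0 Z hμ hq hZ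
    w w1 w2 g h1 h2 hw
    (fun z hz => (hg z hz).trans (mul_le_mul_of_nonneg_right
      ((div_le_iff₀ hd).1 (le_max_left _ _)) (Real.rpow_nonneg (by linarith) _)))
    hlim (by
      have := (div_le_iff₀ hZq).1 (le_max_right (K / (μ * (μ + 1) - q * (q + 1))) (|w Z| / Z ^ (-q)))
      linarith)
  intro z hz
  have := this z hz
  linarith

lemma aux_limit0 (μ q Z : ℝ) (hμ : 0 < μ) (hq : 0 < q) (hqμ : q < μ) (hZ : 0 < Z)
    (w w1 w2 g : ℝ → ℝ)
    (h1 : ∀ z ≥ Z, HasDerivAt w (w1 z) z) (h2 : ∀ z ≥ Z, HasDerivAt w1 (w2 z) z)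
    (hw : ∀ z ≥ Z, w2 z = μ * (μ + 1) * (w z / z ^ 2) + g z)
    (hg : Tendsto (fun z => z ^ (q + 2) * g z) atTop (𝓝 0))
    (hlim : Tendsto w atTop (𝓝 0)) :
    Tendsto (fun z => z ^ q * w z) atTop (𝓝 0) := by
  have hd : 0 < μ * (μ + 1) - q * (q + 1) := by nlinarith
  rw [Metric.tendsto_atTop]
  intro ε hε
  have he2 : 0 < ε / 2 := by linarith
  have hev := (hg.abs).eventually (gt_mem_nhds (show |(0:ℝ)| < ε / 2 * (μ * (μ + 1) - q * (q + 1)) by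
    rw [abs_zero]; positivity))
  obtain ⟨R, hR⟩ := eventually_atTop.1 hev
  set T := max R Z with hT
  have hTZ : Z ≤ T := le_max_right _ _
  have hT0 : 0 < T := by linarith
  have hTμ : 0 < T ^ (-μ) := Real.rpow_pos_of_pos hT0 _
  have hTq : 0 < T ^ (-q) := Real.rpow_pos_of_pos hT0 _
  have key := aux_two μ q (ε / 2) (|w T| / T ^ (-μ)) T hμ hq hT0 w w1 w2 g
    (fun z hz => h1 z (hTZ.trans hz)) (fun z hz => h2 z (hTZ.trans hz))
    (fun z hz => hw z (hTZ.trans hz))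
    (by
      intro z hz
      have hz0 : 0 < z := by linarith
      have a := (hR z ((le_max_left _ _).trans hz)).le
      have hp : 0 < z ^ (q + 2) := Real.rpow_pos_of_pos hz0 _
      rw [abs_mul, abs_of_pos hp] at a
      rw [show -q - 2 = -(q + 2) by ring, Real.rpow_neg hz0.le, ← div_eq_mul_inv, le_div_iff₀ hp]
      linarith)
    hlim (by
      rw [div_mul_cancel₀ _ hTμ.ne']
      have := mul_pos he2 hTq
      linarith)
  set C := |w T| / T ^ (-μ)
  have hdec : Tendsto (fun z : ℝ => C * z ^ (-(μ - q))) atTop (𝓝 0) := by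
    simpa using (aux_neg_pow_tendsto (μ - q) (by linarith)).const_mul C
  obtain ⟨S, hS⟩ := eventually_atTop.1 (hdec.eventually (gt_mem_nhds he2))
  refine ⟨max S T, fun z hz => ?_⟩
  have hzT : T ≤ z := (le_max_right _ _).trans hz
  have hz0 : 0 < z := by linarith
  have hzq : 0 < z ^ q := Real.rpow_pos_of_pos hz0 _
  rw [Real.dist_eq, sub_zero, abs_mul, abs_of_pos hzq]
  have a := mul_le_mul_of_nonneg_left (key z hzT) hzq.le
  have b := hS z ((le_max_left _ _).trans hz)
  have e1 : z ^ q * (ε / 2 * z ^ (-q) + C * z ^ (-μ)) = ε / 2 + C * z ^ (-(μ - q)) := by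
    have : z ^ q * z ^ (-q) = 1 := by rw [← Real.rpow_add hz0]; simp
    have h' : z ^ q * z ^ (-μ) = z ^ (-(μ - q)) := by rw [← Real.rpow_add hz0]; ring_nf
    linear_combination (ε / 2) * this + C * h'
  linarith

lemma aux_limit (μ q c Z : ℝ) (hμ : 0 < μ) (hq : 0 < q) (hqμ : q < μ) (hZ : 0 < Z)
    (w w1 w2 g : ℝ → ℝ)
    (h1 : ∀ z ≥ Z, HasDerivAt w (w1 z) z) (h2 : ∀ z ≥ Z, HasDerivAt w1 (w2 z) z)
    (hw : ∀ z ≥ Z, w2 z = μ * (μ + 1) * (w z / z ^ 2) + g z)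
    (hg : Tendsto (fun z => z ^ (q + 2) * g z) atTop (𝓝 c))
    (hlim : Tendsto w atTop (𝓝 0)) :
    ∃ l, Tendsto (fun z => z ^ q * w z) atTop (𝓝 l) := by
  have hd : 0 < μ * (μ + 1) - q * (q + 1) := by nlinarith
  set d := μ * (μ + 1) - q * (q + 1) with hdd
  have key := aux_limit0 μ q Z hμ hq hqμ hZ (fun z => w z - (-c / d) * z ^ (-q))
    (fun z => w1 z - (-c / d) * (-q * z ^ (-q - 1)))
    (fun z => w2 z - (-c / d) * (-q * (-q - 1) * z ^ (-q - 2)))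
    (fun z => g z - c * z ^ (-q - 2))
    (fun z hz => (h1 z hz).sub ((aux_pow_d1 (-q) z (by linarith)).const_mul _))
    (fun z hz => (h2 z hz).sub ((aux_pow_d2 (-q) z (by linarith)).const_mul _))
    (by
      intro z hz
      have hz0 : 0 < z := by linarith
      have hc : c = c / d * (μ * (μ + 1) - q * (q + 1)) := by
        rw [← hdd]; field_simp
      simp only [hw z hz, aux_rpow_neg_two _ z hz0]
      linear_combination (z ^ (-q) / z ^ 2) * hc)
    (by
      have : Tendsto (fun z => z ^ (q + 2) * g z - c) atTop (𝓝 0) := by simpa using hg.sub_const c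
      refine this.congr' ?_
      filter_upwards [eventually_gt_atTop 0] with z hz0
      have : z ^ (q + 2) * z ^ (-q - 2) = 1 := by
        rw [← Real.rpow_add hz0]; ring_nf; simp
      linear_combination c * this)
    (by simpa using hlim.sub ((aux_neg_pow_tendsto q hq).const_mul (-c / d)))
  refine ⟨-c / d, ?_⟩
  have : Tendsto (fun z => z ^ q * (w z - (-c / d) * z ^ (-q)) + (-c / d)) atTop (𝓝 (-c / d)) := by
    simpa using key.add_const (-c / d)
  refine this.congr' ?_
  filter_upwards [eventually_gt_atTop 0] with z hz0
  have : z ^ q * z ^ (-q) = 1 := by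
    rw [← Real.rpow_add hz0]; simp
  linear_combination -(-c / d) * this

lemma aux_limitB (μ q K Z : ℝ) (hμ : 0 < μ) (hqμ : μ < q) (hZ : 0 < Z)
    (w w1 w2 g : ℝ → ℝ)
    (h1 : ∀ z ≥ Z, HasDerivAt w (w1 z) z) (h2 : ∀ z ≥ Z, HasDerivAt w1 (w2 z) z)
    (hw : ∀ z ≥ Z, w2 z = μ * (μ + 1) * (w z / z ^ 2) + g z)
    (hg : ∀ z ≥ Z, |g z| ≤ K * z ^ (-q - 2))
    (hlim : Tendsto w atTop (𝓝 0)) :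
    ∃ l, Tendsto (fun z => z ^ μ * w z) atTop (𝓝 l) := by
  have hq : 0 < q := by linarith
  have hd : 0 < q * (q + 1) - μ * (μ + 1) := by nlinarith
  set d := q * (q + 1) - μ * (μ + 1) with hdd
  have hK : 0 ≤ K := by
    have := (abs_nonneg _).trans (hg Z le_rfl)
    exact nonneg_of_mul_nonneg_left this (Real.rpow_pos_of_pos hZ _)
  have hKd : 0 ≤ K / d := div_nonneg hK hd.le
  have one : ∀ (w w1 w2 g : ℝ → ℝ)
    (h1 : ∀ z ≥ Z, HasDerivAt w (w1 z) z) (h2 : ∀ z ≥ Z, HasDerivAt w1 (w2 z) z)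
    (hw : ∀ z ≥ Z, w2 z = μ * (μ + 1) * (w z / z ^ 2) + g z)
    (hg : ∀ z ≥ Z, |g z| ≤ K * z ^ (-q - 2))
    (hlim : Tendsto w atTop (𝓝 0)), ∀ T ≥ Z, ∀ z ≥ T,
      z ^ μ * w z ≤ T ^ μ * w T + K / d * T ^ (-(q - μ)) := by
    intro w w1 w2 g h1 h2 hw hg hlim T hT z hz
    have hT0 : 0 < T := by linarith
    have hz0 : 0 < z := by linarith
    have key := aux_upper μ q (-(K / d)) (T ^ μ * w T + K / d * T ^ (-(q - μ))) T hμ hq hT0 w w1 w2 g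
      (fun z hz => h1 z (hT.trans hz)) (fun z hz => h2 z (hT.trans hz))
      (fun z hz => hw z (hT.trans hz))
      (fun z hz => by
        have a := (neg_le_abs _).trans (hg z (hT.trans hz))
        have : -(K / d) * (μ * (μ + 1) - q * (q + 1)) = K := by
          rw [show μ * (μ + 1) - q * (q + 1) = -d by rw [hdd]; ring]; field_simp
        rw [this]; exact a)
      hlim
      (by
        have e1 : T ^ μ * T ^ (-μ) = 1 := by rw [← Real.rpow_add hT0]; simp
        have e2 : T ^ (-(q - μ)) * T ^ (-μ) = T ^ (-q) := by rw [← Real.rpow_add hT0]; ring_nf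
        apply le_of_eq
        linear_combination - w T * e1 - K / d * e2) z hz
    have hzm : 0 < z ^ μ := Real.rpow_pos_of_pos hz0 _
    have hzq : 0 < z ^ (-(q - μ)) := Real.rpow_pos_of_pos hz0 _
    have e1 : z ^ μ * z ^ (-μ) = 1 := by rw [← Real.rpow_add hz0]; simp
    have e2 : z ^ μ * z ^ (-q) = z ^ (-(q - μ)) := by rw [← Real.rpow_add hz0]; ring_nf
    have a := mul_le_mul_of_nonneg_left key hzm.le
    have e3 : z ^ μ * (-(K / d) * z ^ (-q) + (T ^ μ * w T + K / d * T ^ (-(q - μ))) * z ^ (-μ))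
      = -(K / d) * z ^ (-(q - μ)) + (T ^ μ * w T + K / d * T ^ (-(q - μ))) := by
      linear_combination -(K / d) * e2 + (T ^ μ * w T + K / d * T ^ (-(q - μ))) * e1
    have := mul_nonneg hKd hzq.le
    linarith
  have two : ∀ T ≥ Z, ∀ z ≥ T, |z ^ μ * w z - T ^ μ * w T| ≤ K / d * T ^ (-(q - μ)) := by
    intro T hT z hz
    have b1 := one w w1 w2 g h1 h2 hw hg hlim T hT z hz
    have b2 := one (fun z => -w z) (fun z => -w1 z) (fun z => -w2 z)
      (fun z => -g z) (fun z hz => (h1 z hz).neg) (fun z hz => (h2 z hz).neg)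
      (fun z hz => by simp only [hw z hz]; ring)
      (fun z hz => by simpa using hg z hz)
      (by simpa using hlim.neg) T hT z hz
    exact abs_le.2 ⟨by linarith, by linarith⟩
  apply cauchy_map_iff_exists_tendsto.1
  rw [Metric.cauchy_iff]
  refine ⟨map_neBot, fun ε hε => ?_⟩
  have hdec : Tendsto (fun z : ℝ => K / d * z ^ (-(q - μ))) atTop (𝓝 0) := by
    simpa using (aux_neg_pow_tendsto (q - μ) (by linarith)).const_mul (K / d)
  obtain ⟨S, hS⟩ := eventually_atTop.1 (hdec.eventually (gt_mem_nhds (show 0 < ε / 2 by linarith)))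
  set T := max S Z
  refine ⟨(fun z => z ^ μ * w z) '' Ici T, image_mem_map (Ici_mem_atTop T), ?_⟩
  rintro _ ⟨x, hx, rfl⟩ _ ⟨y, hy, rfl⟩
  have b := hS T (le_max_left _ _)
  have b1 := two T (le_max_right _ _) x hx
  have b2 := two T (le_max_right _ _) y hy
  rw [Real.dist_eq]
  rw [abs_le] at b1 b2
  rw [abs_lt]
  constructor <;> linarith [b1.1, b1.2, b2.1, b2.2]

/-- second order Taylor formula for powers -/
lemma aux_taylor (y0 : ℝ) (m : ℕ) : ∃ R : ℝ → ℝ, Continuous R ∧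
    ∀ y, y ^ (m + 1) = y0 ^ (m + 1) + (m + 1) * y0 ^ m * (y - y0) + R y * (y - y0) ^ 2 := by
  induction m with
  | zero => exact ⟨fun _ => 0, continuous_const, fun y => by simp⟩
  | succ m ih =>
    obtain ⟨R, hR, h⟩ := ih
    refine ⟨fun y => (m + 1) * y0 ^ m + y * R y, by fun_prop, fun y => ?_⟩
    rw [pow_succ, h y]; push_cast; ring

open Asymptotics

lemma aux_shift_bigO (b δ : ℝ) :
    (fun z : ℝ => (1 + b / z) ^ (-δ) - 1) =O[atTop] (fun z : ℝ => z⁻¹) := by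
  have h0 : HasDerivAt (fun t : ℝ => 1 + b * t) (b * 1) 0 :=
    ((hasDerivAt_id (0:ℝ)).const_mul b).const_add 1
  have h1 := h0.rpow_const (p := -δ) (Or.inl (by simp))
  have h2 := h1.isBigO_sub.comp_tendsto tendsto_inv_atTop_zero
  simpa [Function.comp_def, div_eq_mul_inv] using h2

lemma aux_shift_d1 (L δ b z : ℝ) (hz : 0 < z + b) :
    HasDerivAt (fun t : ℝ => L * (t + b) ^ (-δ)) (L * (-δ * (z + b) ^ (-δ - 1))) z :=
  ((aux_pow_d1 (-δ) (z + b) hz).comp_add_const z b).const_mul L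

lemma aux_shift_d2 (L δ b z : ℝ) (hz : 0 < z + b) :
    HasDerivAt (fun t : ℝ => L * (-δ * (t + b) ^ (-δ - 1)))
      (L * (-δ * (-δ - 1) * (z + b) ^ (-δ - 2))) z :=
  ((aux_pow_d2 (-δ) (z + b) hz).comp_add_const z b).const_mul L

lemma aux_shift_tendsto (L δ b : ℝ) (hδ : 0 < δ) :
    Tendsto (fun t : ℝ => L * (t + b) ^ (-δ)) atTop (𝓝 0) := by
  have := ((aux_neg_pow_tendsto δ hδ).comp (tendsto_atTop_add_const_right atTop b tendsto_id)).const_mul L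
  simpa using this

lemma aux_base (m : ℕ) (κ L δ s : ℝ) (hs : 0 < s) (hδ : δ * m = m + 3)
    (hy0 : (2 * κ * L) ^ (m + 1) = δ * (δ + 1) * L) :
    (2 * κ * s * (L * s ^ (-δ))) ^ (m + 1) = L * (-δ * (-δ - 1) * s ^ (-δ - 2)) := by
  have e : s * s ^ (-δ) = s ^ (1 - δ) := by
    rw [show 1 - δ = 1 + -δ by ring, Real.rpow_add hs, Real.rpow_one]
  have e2 : (s ^ (1 - δ)) ^ (m + 1) = s ^ (-δ - 2) := by
    rw [← Real.rpow_natCast, ← Real.rpow_mul hs.le]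
    congr 1; push_cast; linear_combination -hδ
  rw [show 2 * κ * s * (L * s ^ (-δ)) = 2 * κ * L * (s * s ^ (-δ)) by ring, e, mul_pow, hy0, e2]
  ring

lemma aux_profile_lower (m : ℕ) (κ L δ : ℝ) (hκ : 0 < κ) (hL : 0 < L) (hδ1 : 1 < δ)
    (hδ : δ * m = m + 3) (hy0 : (2 * κ * L) ^ (m + 1) = δ * (δ + 1) * L)
    (η η1 η2 : ℝ → ℝ) (hp : ∀ z > 0, 0 < η z)
    (h1 : ∀ z > 0, HasDerivAt η (η1 z) z) (h2 : ∀ z > 0, HasDerivAt η1 (η2 z) z)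
    (hode : ∀ z > 0, η2 z = (2 * κ * z * η z + η z ^ 2) ^ (m + 1))
    (hlim : Tendsto η atTop (𝓝 0)) :
    ∃ b > 0, ∀ z ≥ 1, L * (z + b) ^ (-δ) ≤ η z := by
  have ht := aux_shift_tendsto L δ 1 (by linarith)
  obtain ⟨b, ⟨hb1, hb2⟩, hb3⟩ := ((ht.eventually (gt_mem_nhds (hp 1 one_pos))).and
    (ht.eventually (gt_mem_nhds (show 0 < 2 * κ by linarith)))).and (eventually_ge_atTop 1) |>.exists
  refine ⟨b, by linarith, ?_⟩
  have key := aux_max_principle 1 (fun z => η z - L * (z + b) ^ (-δ)) _ _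
    (fun z hz => (h1 z (by linarith)).sub (aux_shift_d1 L δ b z (by linarith)))
    (fun z hz => (h2 z (by linarith)).sub (aux_shift_d2 L δ b z (by linarith)))
    (by rw [add_comm b 1] at hb1; linarith)
    (by simpa using hlim.sub (aux_shift_tendsto L δ b (by linarith)))
    (by
      intro z hz hneg
      have hz0 : 0 < z := by linarith
      have hηz := hp z hz0
      set φ := L * (z + b) ^ (-δ) with hφ
      have hφ1 : φ ≤ 2 * κ * b := by
        have : (z + b) ^ (-δ) ≤ (b + 1) ^ (-δ) :=
          Real.rpow_le_rpow_of_nonpos (by linarith) (by linarith) (by linarith)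
        have := mul_le_mul_of_nonneg_left this hL.le
        nlinarith
      rw [hode z hz0, ← aux_base m κ L δ (z + b) (by linarith) hδ hy0, ← hφ]
      have hφη : η z < φ := by linarith
      have : 2 * κ * z * η z + η z ^ 2 < 2 * κ * (z + b) * φ := by
        have a1 : η z ^ 2 < φ ^ 2 := by nlinarith
        have a2 : 2 * κ * z * η z < 2 * κ * z * φ := by
          apply mul_lt_mul_of_pos_left hφη; positivity
        nlinarith
      have := pow_lt_pow_left₀ this (by positivity) (Nat.succ_ne_zero m)
      simpa using this)
  intro z hz
  have := key z hz
  linarith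

lemma aux_profile_upper (m : ℕ) (κ L δ : ℝ) (hκ : 0 < κ) (hL : 0 < L) (hδ1 : 1 < δ)
    (hδ : δ * m = m + 3) (hy0 : (2 * κ * L) ^ (m + 1) = δ * (δ + 1) * L)
    (η η1 η2 : ℝ → ℝ) (hp : ∀ z > 0, 0 < η z)
    (h1 : ∀ z > 0, HasDerivAt η (η1 z) z) (h2 : ∀ z > 0, HasDerivAt η1 (η2 z) z)
    (hode : ∀ z > 0, η2 z = (2 * κ * z * η z + η z ^ 2) ^ (m + 1))
    (hlim : Tendsto η atTop (𝓝 0)) :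
    ∃ b, 0 < b ∧ b < 1 ∧ ∀ z ≥ 1, η z ≤ L * (z + -b) ^ (-δ) := by
  have hη1 := hp 1 one_pos
  set t := min (1/2) (L / η 1) with ht
  have ht0 : 0 < t := lt_min (by norm_num) (by positivity)
  have ht1 : t ≤ 1/2 := min_le_left _ _
  have ht2 : t ≤ L / η 1 := min_le_right _ _
  have ht3 : η 1 ≤ L * t ^ (-δ) := by
    have a : t ^ (-1 : ℝ) ≤ t ^ (-δ) :=
      Real.rpow_le_rpow_of_exponent_ge ht0 (by linarith) (by linarith)
    rw [Real.rpow_neg_one] at a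
    have b := mul_le_mul_of_nonneg_left a hL.le
    have c : η 1 ≤ L * t⁻¹ := by
      rw [← div_eq_mul_inv, le_div_iff₀ ht0]
      rw [le_div_iff₀ hη1] at ht2; linarith
    linarith
  refine ⟨1 - t, by linarith, by linarith, ?_⟩
  set b := 1 - t with hb
  have key := aux_max_principle 1 (fun z => L * (z + -b) ^ (-δ) - η z) _ _
    (fun z hz => (aux_shift_d1 L δ (-b) z (by linarith)).sub (h1 z (by linarith)))
    (fun z hz => (aux_shift_d2 L δ (-b) z (by linarith)).sub (h2 z (by linarith)))
    (by rw [show 1 + -b = t by rw [hb]; ring]; linarith)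
    (by simpa using (aux_shift_tendsto L δ (-b) (by linarith)).sub hlim)
    (by
      intro z hz hneg
      have hz0 : 0 < z := by linarith
      have hηz := hp z hz0
      have hzb : 0 < z + -b := by linarith
      have hφ0 : 0 < L * (z + -b) ^ (-δ) := mul_pos hL (Real.rpow_pos_of_pos hzb _)
      rw [hode z hz0, ← aux_base m κ L δ (z + -b) hzb hδ hy0]
      set φ := L * (z + -b) ^ (-δ) with hφ
      have hφη : φ < η z := by linarith
      have : 2 * κ * (z + -b) * φ < 2 * κ * z * η z + η z ^ 2 := by
        have a2 : 2 * κ * z * φ < 2 * κ * z * η z := by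
          apply mul_lt_mul_of_pos_left hφη; positivity
        have a3 : 2 * κ * (z + -b) * φ ≤ 2 * κ * z * φ := by
          gcongr; linarith
        nlinarith
      have := pow_lt_pow_left₀ this (by positivity) (Nat.succ_ne_zero m)
      simpa using this)
  intro z hz
  have := key z hz
  linarith

lemma aux_profile_first (m : ℕ) (κ L δ : ℝ) (hκ : 0 < κ) (hL : 0 < L) (hδ1 : 1 < δ)
    (hδ : δ * m = m + 3) (hy0 : (2 * κ * L) ^ (m + 1) = δ * (δ + 1) * L)
    (η η1 η2 : ℝ → ℝ) (hp : ∀ z > 0, 0 < η z)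
    (h1 : ∀ z > 0, HasDerivAt η (η1 z) z) (h2 : ∀ z > 0, HasDerivAt η1 (η2 z) z)
    (hode : ∀ z > 0, η2 z = (2 * κ * z * η z + η z ^ 2) ^ (m + 1))
    (hlim : Tendsto η atTop (𝓝 0)) :
    (fun z : ℝ => z ^ δ * η z - L) =O[atTop] (fun z : ℝ => z⁻¹) := by
  obtain ⟨b, hb, hlow⟩ := aux_profile_lower m κ L δ hκ hL hδ1 hδ hy0 η η1 η2 hp h1 h2 hode hlim
  obtain ⟨b', hb', hb'1, hup⟩ := aux_profile_upper m κ L δ hκ hL hδ1 hδ hy0 η η1 η2 hp h1 h2 hode hlim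
  have conv : ∀ c z : ℝ, 0 < z → 0 < z + c →
      z ^ δ * (L * (z + c) ^ (-δ)) = L * (1 + c / z) ^ (-δ) := by
    intro c z hz hzc
    have : 1 + c / z = (z + c) / z := by field_simp
    rw [this, Real.div_rpow hzc.le hz.le, Real.rpow_neg hz.le δ]
    field_simp
  have o1 := (aux_shift_bigO b δ).const_mul_left L
  have o2 := (aux_shift_bigO (-b') δ).const_mul_left L
  have o3 := o1.norm_left.add o2.norm_left
  refine IsBigO.trans (IsBigO.of_bound 1 ?_) o3
  filter_upwards [eventually_ge_atTop 1] with z hz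
  have hz0 : 0 < z := by linarith
  have hzd : 0 < z ^ δ := Real.rpow_pos_of_pos hz0 _
  have a1 := mul_le_mul_of_nonneg_left (hlow z hz) hzd.le
  have a2 := mul_le_mul_of_nonneg_left (hup z hz) hzd.le
  rw [conv b z hz0 (by linarith)] at a1
  rw [conv (-b') z hz0 (by linarith)] at a2
  simp only [Real.norm_eq_abs, one_mul]
  rw [abs_of_nonneg (a := |_| + |_|) (by positivity)]
  have c1 := neg_abs_le (L * ((1 + b / z) ^ (-δ) - 1))
  have c2 := le_abs_self (L * ((1 + -b' / z) ^ (-δ) - 1))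
  have c3 := abs_nonneg (L * ((1 + b / z) ^ (-δ) - 1))
  have c4 := abs_nonneg (L * ((1 + -b' / z) ^ (-δ) - 1))
  rw [abs_le]
  constructor <;> linarith

/-- The remainder `g` in the Euler equation for v. -/
lemma aux_profile_g (m : ℕ) (κ L δ : ℝ) (hL : 0 < L)
    (hδ : δ * m = m + 3) (hy0 : (2 * κ * L) ^ (m + 1) = δ * (δ + 1) * L)
    (η η2 : ℝ → ℝ)
    (hode : ∀ z > 0, η2 z = (2 * κ * z * η z + η z ^ 2) ^ (m + 1)) :
    ∃ R : ℝ → ℝ, Continuous R ∧ ∀ z > 0,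
      z ^ (δ + 2) * (η2 z - L * (-δ * (-δ - 1) * z ^ (-δ - 2))
        - (m + 1) * (δ * (δ + 1)) * ((η z - L * z ^ (-δ)) / z ^ 2))
      = (m + 1) * (2 * κ * L) ^ m * ((z ^ δ * η z) ^ 2 * z ^ (-δ - 1))
        + R (2 * κ * (z ^ δ * η z) + (z ^ δ * η z) ^ 2 * z ^ (-δ - 1))
          * (2 * κ * (z ^ δ * η z - L) + (z ^ δ * η z) ^ 2 * z ^ (-δ - 1)) ^ 2 := by
  obtain ⟨R, hR, hT⟩ := aux_taylor (2 * κ * L) m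
  refine ⟨R, hR, fun z hz => ?_⟩
  set U := z ^ δ * η z with hU
  set s := z ^ (-δ - 1) with hs
  set Y := 2 * κ * U + U ^ 2 * s with hY
  have hη : η z = z ^ (-δ) * U := by
    rw [hU, ← mul_assoc, ← Real.rpow_add hz]; simp
  have hsz : z ^ (-δ) = z * s := by
    rw [hs, show -δ = 1 + (-δ - 1) by ring, Real.rpow_add hz, Real.rpow_one]; ring_nf
  have hF : 2 * κ * z * η z + η z ^ 2 = z ^ (1 - δ) * Y := by
    have : z ^ (1 - δ) = z * z ^ (-δ) := by
      rw [show 1 - δ = 1 + -δ by ring, Real.rpow_add hz, Real.rpow_one]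
    rw [this, hη, hY, hsz]; ring
  have hF2 : η2 z = z ^ (-δ - 2) * Y ^ (m + 1) := by
    rw [hode z hz, hF, mul_pow]
    congr 1
    rw [← Real.rpow_natCast, ← Real.rpow_mul hz.le]
    congr 1; push_cast; linear_combination -hδ
  have e1 : z ^ (δ + 2) * z ^ (-δ - 2) = 1 := by
    rw [← Real.rpow_add hz]; ring_nf; simp
  have e2 : z ^ (-δ - 2) = z ^ (-δ) / z ^ 2 := aux_rpow_neg_two _ _ hz
  have hT' := hT Y
  have hYY : Y - 2 * κ * L = 2 * κ * (U - L) + U ^ 2 * s := by rw [hY]; ring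
  have hP : (2 * κ * L) ^ m * (2 * κ) = δ * (δ + 1) := by
    have : (2 * κ * L) ^ m * (2 * κ) * L = δ * (δ + 1) * L := by rw [← hy0]; ring
    exact mul_right_cancel₀ hL.ne' this
  rw [hYY] at hT'
  rw [hF2, show (η z - L * z ^ (-δ)) / z ^ 2 = z ^ (-δ - 2) * (U - L) by rw [e2, hη]; ring]
  have : z ^ (δ + 2) * (z ^ (-δ - 2) * Y ^ (m + 1) - L * (-δ * (-δ - 1) * z ^ (-δ - 2)) -
        (m + 1) * (δ * (δ + 1)) * (z ^ (-δ - 2) * (U - L)))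
      = Y ^ (m + 1) - L * (δ * (δ + 1)) - (m + 1) * (δ * (δ + 1)) * (U - L) := by
    linear_combination (Y ^ (m + 1) - L * (δ * (δ + 1)) - (m + 1) * (δ * (δ + 1)) * (U - L)) * e1
  rw [this, hT', hy0]
  linear_combination (m + 1) * (U - L) * hP

lemma aux_rpow_bigO (a b : ℝ) (hab : a ≤ b) :
    (fun z : ℝ => z ^ a) =O[atTop] (fun z : ℝ => z ^ b) := by
  refine IsBigO.of_bound 1 ?_
  filter_upwards [eventually_ge_atTop 1] with z hz
  have hz0 : (0:ℝ) ≤ z := by linarith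
  rw [Real.norm_of_nonneg (Real.rpow_nonneg hz0 _), Real.norm_of_nonneg (Real.rpow_nonneg hz0 _),
    one_mul]
  exact Real.rpow_le_rpow_of_exponent_le hz hab

lemma aux_rpow_mul_congr (a b c : ℝ) (h : a + b = c) :
    (fun z : ℝ => z ^ a * z ^ b) =ᶠ[atTop] (fun z : ℝ => z ^ c) := by
  filter_upwards [eventually_gt_atTop 0] with z hz
  rw [← Real.rpow_add hz, h]

/-- shift a big-O by a power -/
lemma aux_bigO_shift (a b c : ℝ) (f : ℝ → ℝ) (h : a + b = c)
    (hf : f =O[atTop] (fun z : ℝ => z ^ b)) :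
    (fun z => z ^ a * f z) =O[atTop] (fun z : ℝ => z ^ c) :=
  ((isBigO_refl (fun z : ℝ => z ^ a) atTop).mul hf).trans
    (aux_rpow_mul_congr a b c h).isBigO

lemma aux_bigO_unshift (a b c : ℝ) (f : ℝ → ℝ) (h : a + b = c)
    (hf : (fun z => z ^ a * f z) =O[atTop] (fun z : ℝ => z ^ c)) :
    f =O[atTop] (fun z : ℝ => z ^ b) := by
  have := aux_bigO_shift (-a) c b _ (by linarith) hf
  refine this.congr' ?_ EventuallyEq.rfl
  filter_upwards [eventually_gt_atTop 0] with z hz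
  rw [← mul_assoc, ← Real.rpow_add hz]; simp

lemma aux_bigO_bound (b : ℝ) (f : ℝ → ℝ) (hf : f =O[atTop] (fun z : ℝ => z ^ b)) :
    ∃ K Z : ℝ, 1 ≤ Z ∧ ∀ z ≥ Z, |f z| ≤ K * z ^ b := by
  obtain ⟨K, hK⟩ := hf.bound
  obtain ⟨Z, hZ⟩ := eventually_atTop.1 hK
  refine ⟨K, max Z 1, le_max_right _ _, fun z hz => ?_⟩
  have := hZ z ((le_max_left _ _).trans hz)
  have hz0 : 0 ≤ z := by linarith [(le_max_right Z 1).trans hz]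
  rwa [Real.norm_of_nonneg (Real.rpow_nonneg hz0 _), Real.norm_eq_abs] at this

lemma aux_bound_bigO (b M Z : ℝ) (f : ℝ → ℝ) (h : ∀ z ≥ Z, |f z| ≤ M * z ^ b) :
    f =O[atTop] (fun z : ℝ => z ^ b) := by
  refine IsBigO.of_bound M ?_
  filter_upwards [eventually_ge_atTop Z, eventually_ge_atTop 0] with z hz hz0
  rw [Real.norm_of_nonneg (Real.rpow_nonneg hz0 _), Real.norm_eq_abs]
  exact h z hz

lemma aux_profile_g_limit (m : ℕ) (κ L δ μ : ℝ) (hκ : 0 < κ) (hL : 0 < L) (hδ1 : 1 < δ)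
    (hδ2 : δ ≤ 2) (hμ : δ + 2 < μ) (hμP : μ * (μ + 1) = (m + 1) * (δ * (δ + 1)))
    (hδ : δ * m = m + 3) (hy0 : (2 * κ * L) ^ (m + 1) = δ * (δ + 1) * L)
    (η η1 η2 : ℝ → ℝ) (hp : ∀ z > 0, 0 < η z)
    (h1 : ∀ z > 0, HasDerivAt η (η1 z) z) (h2 : ∀ z > 0, HasDerivAt η1 (η2 z) z)
    (hode : ∀ z > 0, η2 z = (2 * κ * z * η z + η z ^ 2) ^ (m + 1))
    (hlim : Tendsto η atTop (𝓝 0)) :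
    ∃ c, Tendsto (fun z => z ^ (2 * δ + 1 + 2) * (η2 z - L * (-δ * (-δ - 1) * z ^ (-δ - 2))
        - μ * (μ + 1) * ((η z - L * z ^ (-δ)) / z ^ 2))) atTop (𝓝 c) := by
  have hfirst := aux_profile_first m κ L δ hκ hL hδ1 hδ hy0 η η1 η2 hp h1 h2 hode hlim
  obtain ⟨R, hR, hg⟩ := aux_profile_g m κ L δ hL hδ hy0 η η2 hode
  rw [← hμP] at hg
  set g : ℝ → ℝ := fun z => η2 z - L * (-δ * (-δ - 1) * z ^ (-δ - 2))
        - μ * (μ + 1) * ((η z - L * z ^ (-δ)) / z ^ 2) with hgdef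
  have hfirst' : (fun z : ℝ => z ^ δ * η z - L) =O[atTop] (fun z : ℝ => z ^ (-1 : ℝ)) := by
    simpa [Real.rpow_neg_one] using hfirst
  have hU : Tendsto (fun z : ℝ => z ^ δ * η z) atTop (𝓝 L) := by
    have := (hfirst.trans_tendsto tendsto_inv_atTop_zero).add_const L
    simpa using this
  have hs0 : Tendsto (fun z : ℝ => z ^ (-δ - 1)) atTop (𝓝 0) := by
    have := aux_neg_pow_tendsto (δ + 1) (by linarith)
    rwa [show -(δ + 1) = -δ - 1 by ring] at this
  have hU2 : Tendsto (fun z : ℝ => (z ^ δ * η z) ^ 2) atTop (𝓝 (L ^ 2)) := hU.pow 2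
  have hY : Tendsto (fun z : ℝ => 2 * κ * (z ^ δ * η z) + (z ^ δ * η z) ^ 2 * z ^ (-δ - 1))
      atTop (𝓝 (2 * κ * L)) := by
    have := (hU.const_mul (2 * κ)).add (hU2.mul hs0)
    simpa using this
  have hRY := ((hR.tendsto _).comp hY).isBigO_one ℝ
  have hUs : (fun z : ℝ => (z ^ δ * η z) ^ 2 * z ^ (-δ - 1)) =O[atTop] (fun z : ℝ => z ^ (-2 : ℝ)) := by
    have := (hU2.isBigO_one ℝ).mul (aux_rpow_bigO (-δ - 1) (-2) (by linarith))
    simpa using this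
  have quad : ∀ k : ℝ, -2 ≤ k → (fun z : ℝ => z ^ δ * η z - L) =O[atTop] (fun z : ℝ => z ^ k) →
      (fun z : ℝ => R (2 * κ * (z ^ δ * η z) + (z ^ δ * η z) ^ 2 * z ^ (-δ - 1))
          * (2 * κ * (z ^ δ * η z - L) + (z ^ δ * η z) ^ 2 * z ^ (-δ - 1)) ^ 2) =O[atTop]
      (fun z : ℝ => z ^ (2 * k)) := by
    intro k hk hO
    have hX := (hO.const_mul_left (2 * κ)).add (hUs.trans (aux_rpow_bigO (-2) k hk))
    have := hRY.mul (hX.pow 2)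
    refine this.congr' EventuallyEq.rfl ?_
    filter_upwards [eventually_gt_atTop 0] with z hz
    rw [one_mul, ← Real.rpow_natCast, ← Real.rpow_mul hz.le]
    push_cast; ring_nf
  have p1 : (fun z => z ^ (δ + 2) * g z) =O[atTop] (fun z : ℝ => z ^ (-2 : ℝ)) := by
    have q := quad (-1) (by norm_num) hfirst'
    rw [show (2:ℝ) * -1 = -2 by norm_num] at q
    have := (hUs.const_mul_left ((m + 1) * (2 * κ * L) ^ m)).add q
    refine this.congr' ?_ EventuallyEq.rfl
    filter_upwards [eventually_gt_atTop 0] with z hz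
    exact (hg z hz).symm
  have p1' : g =O[atTop] (fun z : ℝ => z ^ (-(δ + 2) - 2)) :=
    aux_bigO_unshift (δ + 2) _ (-2) g (by ring) p1
  obtain ⟨K, Z, hZ, hK⟩ := aux_bigO_bound _ _ p1'
  obtain ⟨M, hM⟩ := aux_bigO μ (δ + 2) K Z (by linarith) (by linarith) hμ (by linarith)
    (fun z => η z - L * z ^ (-δ)) (fun z => η1 z - L * (-δ * z ^ (-δ - 1)))
    (fun z => η2 z - L * (-δ * (-δ - 1) * z ^ (-δ - 2))) g
    (fun z hz => (h1 z (by linarith)).sub ((aux_pow_d1 (-δ) z (by linarith)).const_mul L))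
    (fun z hz => (h2 z (by linarith)).sub ((aux_pow_d2 (-δ) z (by linarith)).const_mul L))
    (fun z hz => by simp only [hgdef]; ring) hK
    (by simpa using hlim.sub ((aux_neg_pow_tendsto δ (by linarith)).const_mul L))
  have hv := aux_bigO_shift δ _ (-2) _ (by ring) (aux_bound_bigO _ _ _ _ hM)
  have hsecond : (fun z : ℝ => z ^ δ * η z - L) =O[atTop] (fun z : ℝ => z ^ (-2 : ℝ)) := by
    refine hv.congr' ?_ EventuallyEq.rfl
    filter_upwards [eventually_gt_atTop 0] with z hz
    have : z ^ δ * z ^ (-δ) = 1 := by rw [← Real.rpow_add hz]; simp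
    linear_combination -L * this
  have q := quad (-2) le_rfl hsecond
  have q' := aux_bigO_shift (δ + 1) _ (-(3 - δ)) _ (by ring) q
  have q0 := q'.trans_tendsto (aux_neg_pow_tendsto (3 - δ) (by linarith))
  refine ⟨(m + 1) * (2 * κ * L) ^ m * L ^ 2 + 0, ?_⟩
  refine ((hU2.const_mul ((m + 1) * (2 * κ * L) ^ m)).add q0).congr' ?_
  filter_upwards [eventually_gt_atTop 0] with z hz
  have e1 : z ^ (δ + 1) * z ^ (-δ - 1) = 1 := by rw [← Real.rpow_add hz]; ring_nf; simp
  have e2 : z ^ (2 * δ + 1 + 2) = z ^ (δ + 1) * z ^ (δ + 2) := by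
    rw [← Real.rpow_add hz]; ring_nf
  have e3 := hg z hz
  rw [e2, mul_assoc (z ^ (δ + 1)), e3]
  linear_combination -((m + 1) * (2 * κ * L) ^ m * (z ^ δ * η z) ^ 2) * e1

lemma aux_deriv_tendsto (η η1 η2 : ℝ → ℝ)
    (h1 : ∀ z > 0, HasDerivAt η (η1 z) z) (h2 : ∀ z > 0, HasDerivAt η1 (η2 z) z)
    (hpos : ∀ z > 0, 0 ≤ η2 z)
    (hlim : Tendsto η atTop (𝓝 0)) : Tendsto η1 atTop (𝓝 0) := by
  have mono : ∀ x y, 0 < x → x < y → η1 x ≤ η1 y := by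
    intro x y hx hxy
    obtain ⟨c, hc, hce⟩ := exists_hasDerivAt_eq_slope η1 η2 hxy
      (fun t ht => (h2 t (by linarith [ht.1])).continuousAt.continuousWithinAt)
      (fun t ht => h2 t (by linarith [ht.1]))
    have := hpos c (by linarith [hc.1])
    rw [hce] at this
    by_contra hcon
    push Not at hcon
    have := div_neg_of_neg_of_pos (sub_neg.2 hcon) (sub_pos.2 hxy)
    linarith
  have step : ∀ x, 0 < x → ∃ c, x < c ∧ c < x + 1 ∧ η1 c = η (x + 1) - η x := by
    intro x hx
    obtain ⟨c, hc, hce⟩ := exists_hasDerivAt_eq_slope η η1 (show x < x + 1 by linarith)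
      (fun t ht => (h1 t (by linarith [ht.1])).continuousAt.continuousWithinAt)
      (fun t ht => h1 t (by linarith [ht.1]))
    refine ⟨c, hc.1, hc.2, ?_⟩
    rw [hce]; ring
  have l1 : Tendsto (fun z => η (z + 1) - η z) atTop (𝓝 0) := by
    simpa using (hlim.comp (tendsto_atTop_add_const_right atTop 1 tendsto_id)).sub hlim
  have l2 : Tendsto (fun z => η z - η (z - 1)) atTop (𝓝 0) := by
    simpa [sub_eq_add_neg] using hlim.sub (hlim.comp (tendsto_atTop_add_const_right atTop (-1) tendsto_id))
  refine tendsto_of_tendsto_of_tendsto_of_le_of_le' l2 l1 ?_ ?_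
  · filter_upwards [eventually_gt_atTop 1] with z hz
    obtain ⟨c, hc1, hc2, hc⟩ := step (z - 1) (by linarith)
    rw [sub_add_cancel] at hc hc2
    rw [← hc]; exact mono _ _ (by linarith) hc2
  · filter_upwards [eventually_gt_atTop 1] with z hz
    obtain ⟨c, hc1, hc2, hc⟩ := step z (by linarith)
    rw [← hc]; exact mono _ _ (by linarith) hc1

/-- Second-order asymptotics of the profile and of its derivative. -/
lemma aux_profile_main (m : ℕ) (κ L δ μ d : ℝ) (hκ : 0 < κ) (hL : 0 < L) (hδ1 : 1 < δ)
    (hδ2 : δ ≤ 2) (hμ : δ + 2 < μ) (hμP : μ * (μ + 1) = (m + 1) * (δ * (δ + 1)))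
    (hδ : δ * m = m + 3) (hy0 : (2 * κ * L) ^ (m + 1) = δ * (δ + 1) * L)
    (hd : (d = μ ∧ μ < 2 * δ + 1) ∨ (d = 2 * δ + 1 ∧ 2 * δ + 1 < μ))
    (η η1 η2 : ℝ → ℝ) (hp : ∀ z > 0, 0 < η z)
    (h1 : ∀ z > 0, HasDerivAt η (η1 z) z) (h2 : ∀ z > 0, HasDerivAt η1 (η2 z) z)
    (hode : ∀ z > 0, η2 z = (2 * κ * z * η z + η z ^ 2) ^ (m + 1))
    (hlim : Tendsto η atTop (𝓝 0)) :
    (∃ l, Tendsto (fun z => z ^ d * (η z - L * z ^ (-δ))) atTop (𝓝 l)) ∧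
    (∃ l, Tendsto (fun z => z ^ (d + 1) * (η1 z - L * (-δ * z ^ (-δ - 1)))) atTop (𝓝 l)) := by
  obtain ⟨c, hc⟩ := aux_profile_g_limit m κ L δ μ hκ hL hδ1 hδ2 hμ hμP hδ hy0 η η1 η2 hp h1 h2 hode hlim
  set g : ℝ → ℝ := fun z => η2 z - L * (-δ * (-δ - 1) * z ^ (-δ - 2))
        - μ * (μ + 1) * ((η z - L * z ^ (-δ)) / z ^ 2) with hgdef
  change Tendsto (fun z => z ^ (2 * δ + 1 + 2) * g z) atTop (𝓝 c) at hc
  have D1 : ∀ z > 0, HasDerivAt (fun z => η z - L * z ^ (-δ)) (η1 z - L * (-δ * z ^ (-δ - 1))) z :=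
    fun z hz => (h1 z (by linarith)).sub ((aux_pow_d1 (-δ) z (by linarith)).const_mul L)
  have D2 : ∀ z > 0, HasDerivAt (fun z => η1 z - L * (-δ * z ^ (-δ - 1)))
      (η2 z - L * (-δ * (-δ - 1) * z ^ (-δ - 2))) z :=
    fun z hz => (h2 z (by linarith)).sub ((aux_pow_d2 (-δ) z (by linarith)).const_mul L)
  have hvlim : Tendsto (fun z => η z - L * z ^ (-δ)) atTop (𝓝 0) := by
    simpa using hlim.sub ((aux_neg_pow_tendsto δ (by linarith)).const_mul L)
  have hd0 : 0 < d := by rcases hd with ⟨h, _⟩ | ⟨h, _⟩ <;> rw [h] <;> linarith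
  have hd1 : d ≤ 2 * δ + 1 := by rcases hd with ⟨h, _⟩ | ⟨h, _⟩ <;> rw [h]; linarith
  have A : ∃ l, Tendsto (fun z => z ^ d * (η z - L * z ^ (-δ))) atTop (𝓝 l) := by
    rcases hd with ⟨h, hlt⟩ | ⟨h, hlt⟩
    · rw [h]
      have hgO : g =O[atTop] (fun z : ℝ => z ^ (-(2 * δ + 1) - 2)) := by
        refine aux_bigO_unshift (2 * δ + 1 + 2) _ 0 g (by ring) ?_
        simpa only [Real.rpow_zero] using hc.isBigO_one ℝ
      obtain ⟨K, Z, hZ, hK⟩ := aux_bigO_bound _ _ hgO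
      exact aux_limitB μ (2 * δ + 1) K Z (by linarith) hlt (by linarith) _ _ _ g
        (fun z hz => D1 z (by linarith)) (fun z hz => D2 z (by linarith))
        (fun z hz => by simp only [hgdef]; ring) hK hvlim
    · rw [h]
      exact aux_limit μ (2 * δ + 1) c 1 (by linarith) (by linarith) hlt (by linarith) _ _ _ g
        (fun z hz => D1 z (by linarith)) (fun z hz => D2 z (by linarith))
        (fun z hz => by simp only [hgdef]; ring) hc hvlim
  refine ⟨A, ?_⟩
  obtain ⟨l, hl⟩ := A
  have hη1 : Tendsto η1 atTop (𝓝 0) := aux_deriv_tendsto η η1 η2 h1 h2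
    (fun z hz => by rw [hode z hz]; have := hp z hz; positivity) hlim
  have hv1 : Tendsto (fun z => η1 z - L * (-δ * z ^ (-δ - 1))) atTop (𝓝 0) := by
    have := aux_neg_pow_tendsto (δ + 1) (by linarith)
    rw [show -(δ + 1) = -δ - 1 by ring] at this
    simpa using hη1.sub ((this.const_mul (-δ)).const_mul L)
  have hpw : ∃ p, Tendsto (fun z : ℝ => z ^ (d - (2 * δ + 1))) atTop (𝓝 p) := by
    rcases eq_or_lt_of_le hd1 with h | h
    · exact ⟨1, by simp [h]⟩
    · exact ⟨0, by simpa using aux_neg_pow_tendsto (2 * δ + 1 - d) (by linarith)⟩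
  obtain ⟨p, hpw⟩ := hpw
  have hv2 : Tendsto (fun z => z ^ (d + 2) * (η2 z - L * (-δ * (-δ - 1) * z ^ (-δ - 2)))) atTop
      (𝓝 (μ * (μ + 1) * l + p * c)) := by
    refine ((hl.const_mul (μ * (μ + 1))).add (hpw.mul hc)).congr' ?_
    filter_upwards [eventually_gt_atTop 0] with z hz
    have e1 : z ^ (d - (2 * δ + 1)) * z ^ (2 * δ + 1 + 2) = z ^ (d + 2) := by
      rw [← Real.rpow_add hz]; ring_nf
    have e2 : z ^ (d + 2) = z ^ d * z ^ 2 := by rw [Real.rpow_add hz]; norm_num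
    have e3 : η2 z - L * (-δ * (-δ - 1) * z ^ (-δ - 2)) =
      μ * (μ + 1) * ((η z - L * z ^ (-δ)) / z ^ 2) + g z := by simp only [hgdef]; ring
    rw [e3, ← mul_assoc (z ^ (d - (2 * δ + 1))), e1, e2]
    field_simp
  refine ⟨(μ * (μ + 1) * l + p * c) / (-(d + 1)), ?_⟩
  have lh := HasDerivAt.lhopital_zero_atTop (f := fun z => η1 z - L * (-δ * z ^ (-δ - 1)))
    (f' := fun z => η2 z - L * (-δ * (-δ - 1) * z ^ (-δ - 2)))
    (g := fun z : ℝ => z ^ (-(d + 1))) (g' := fun z : ℝ => -(d + 1) * z ^ (-(d + 1) - 1))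
    (l := 𝓝 ((μ * (μ + 1) * l + p * c) / (-(d + 1))))
    (by filter_upwards [eventually_gt_atTop 0] with z hz using D2 z hz)
    (by filter_upwards [eventually_gt_atTop 0] with z hz using aux_pow_d1 _ z hz)
    (by
      filter_upwards [eventually_gt_atTop 0] with z hz
      have := Real.rpow_pos_of_pos hz (-(d + 1) - 1)
      exact mul_ne_zero (by linarith) this.ne')
    hv1 (aux_neg_pow_tendsto (d + 1) (by linarith))
    (by
      refine (hv2.div_const (-(d + 1))).congr' ?_
      filter_upwards [eventually_gt_atTop 0] with z hz
      rw [show -(d + 1) - 1 = -(d + 2) by ring, Real.rpow_neg hz.le]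
      have := Real.rpow_pos_of_pos hz (d + 2)
      have : -(d + 1) ≠ 0 := by linarith
      field_simp)
  refine lh.congr' ?_
  filter_upwards [eventually_gt_atTop 0] with z hz
  rw [Real.rpow_neg hz.le]
  have := Real.rpow_pos_of_pos hz (d + 1)
  field_simp

lemma aux_taylor1 (y0 : ℝ) (m : ℕ) : ∃ S : ℝ → ℝ, Continuous S ∧
    ∀ y, y ^ m = y0 ^ m + S y * (y - y0) := by
  induction m with
  | zero => exact ⟨fun _ => 0, continuous_const, fun y => by simp⟩
  | succ m ih =>
    obtain ⟨R, hR, h⟩ := ih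
    refine ⟨fun y => y0 ^ m + y * R y, by fun_prop, fun y => ?_⟩
    rw [pow_succ, h y]; ring

lemma aux_corrector_main (m : ℕ) (κ L δ μ d κ3 γ α l0 : ℝ) (hκ : 0 < κ) (hL : 0 < L) (hδ1 : 1 < δ)
    (hδ2 : δ ≤ 2) (hμ : δ + 2 < μ) (hμP : μ * (μ + 1) = (m + 1) * (δ * (δ + 1)))
    (hδ : δ * m = m + 3) (hy0 : (2 * κ * L) ^ (m + 1) = δ * (δ + 1) * L)
    (hd : (d = μ ∧ μ < 2 * δ + 1) ∨ (d = 2 * δ + 1 ∧ 2 * δ + 1 < μ))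
    (hid : l0 * ((m + 1) * (δ * (δ + 1))) + 2 * (m + 1) * κ3 * (2 * κ * L) ^ m * L - γ * L
      + α * δ * L - l0 * ((2 - δ) * (1 - δ)) = 0)
    (η η1 η2 : ℝ → ℝ) (hp : ∀ z > 0, 0 < η z)
    (h1 : ∀ z > 0, HasDerivAt η (η1 z) z) (h2 : ∀ z > 0, HasDerivAt η1 (η2 z) z)
    (hode : ∀ z > 0, η2 z = (2 * κ * z * η z + η z ^ 2) ^ (m + 1))
    (hlim : Tendsto η atTop (𝓝 0))
    (h k1 k2 : ℝ → ℝ)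
    (hk1 : ∀ z > 0, HasDerivAt h (k1 z) z) (hk2 : ∀ z > 0, HasDerivAt k1 (k2 z) z)
    (hkode : ∀ z > 0, k2 z + γ * η z + α * z * η1 z = (m + 1) * (2 * κ * z * η z + η z ^ 2) ^ m
      * ((2 * κ * z + 2 * η z) * h z + 2 * κ3 * z ^ 3 * η z))
    (hhlim : Tendsto (fun z => h z - l0 * z ^ (2 - δ)) atTop (𝓝 0)) :
    ∃ l, Tendsto (fun z => z ^ (d - 2) * (h z - l0 * z ^ (2 - δ))) atTop (𝓝 l) := by
  obtain ⟨⟨l, hl⟩, ⟨l', hl'⟩⟩ := aux_profile_main m κ L δ μ d hκ hL hδ1 hδ2 hμ hμP hδ hy0 hd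
    η η1 η2 hp h1 h2 hode hlim
  have hd0 : 2 < d := by rcases hd with ⟨h, _⟩ | ⟨h, _⟩ <;> rw [h] <;> linarith
  have hd1 : d ≤ 2 * δ + 1 := by rcases hd with ⟨h, _⟩ | ⟨h, _⟩ <;> rw [h]; linarith
  have hdμ : d ≤ μ := by rcases hd with ⟨h, _⟩ | ⟨h, _⟩ <;> rw [h]; linarith
  have hdδ : δ < d := by rcases hd with ⟨h, _⟩ | ⟨h, _⟩ <;> rw [h] <;> linarith
  obtain ⟨S, hS, hT⟩ := aux_taylor1 (2 * κ * L) m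
  set U : ℝ → ℝ := fun z => z ^ δ * η z with hUdef
  set s : ℝ → ℝ := fun z => z ^ (-δ - 1) with hsdef
  set Y : ℝ → ℝ := fun z => 2 * κ * U z + U z ^ 2 * s z with hYdef
  set w : ℝ → ℝ := fun z => h z - l0 * z ^ (2 - δ) with hwdef
  have hUL : Tendsto (fun z => z ^ (d - δ) * (U z - L)) atTop (𝓝 l) := by
    refine hl.congr' ?_
    filter_upwards [eventually_gt_atTop 0] with z hz
    have e1 : z ^ d = z ^ (d - δ) * z ^ δ := by rw [← Real.rpow_add hz]; ring_nf
    have e2 : z ^ δ * z ^ (-δ) = 1 := by rw [← Real.rpow_add hz]; simp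
    simp only [hUdef]
    rw [e1]
    linear_combination -(z ^ (d - δ) * L) * e2
  have hU : Tendsto U atTop (𝓝 L) := by
    have := ((aux_neg_pow_tendsto (d - δ) (by linarith)).mul hUL).add_const L
    rw [zero_mul, zero_add] at this
    refine this.congr' ?_
    filter_upwards [eventually_gt_atTop 0] with z hz
    have e2 : z ^ (-(d - δ)) * z ^ (d - δ) = 1 := by rw [← Real.rpow_add hz]; simp
    linear_combination (U z - L) * e2
  have hs0 : Tendsto s atTop (𝓝 0) := by
    have := aux_neg_pow_tendsto (δ + 1) (by linarith)
    rwa [show -(δ + 1) = -δ - 1 by ring] at this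
  have hY : Tendsto Y atTop (𝓝 (2 * κ * L)) := by
    have := (hU.const_mul (2 * κ)).add ((hU.pow 2).mul hs0)
    simpa using this
  have hps : ∃ p, Tendsto (fun z : ℝ => z ^ (d - δ) * s z) atTop (𝓝 p) := by
    have cg := (aux_rpow_mul_congr (d - δ) (-δ - 1) (d - (2 * δ + 1)) (by ring)).symm
    rcases eq_or_lt_of_le hd1 with h | h
    · exact ⟨1, Tendsto.congr' cg (by simp [h])⟩
    · exact ⟨0, Tendsto.congr' cg (by simpa using aux_neg_pow_tendsto (2 * δ + 1 - d) (by linarith))⟩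
  obtain ⟨p, hps⟩ := hps
  have hpe : ∃ e, Tendsto (fun z : ℝ => z ^ (δ - 2)) atTop (𝓝 e) := by
    rcases eq_or_lt_of_le hδ2 with h | h
    · exact ⟨1, by simp [h]⟩
    · exact ⟨0, by simpa using aux_neg_pow_tendsto (2 - δ) (by linarith)⟩
  obtain ⟨e, hpe⟩ := hpe
  have hYm : Tendsto (fun z => z ^ (d - δ) * (Y z ^ m - (2 * κ * L) ^ m)) atTop
      (𝓝 (S (2 * κ * L) * (2 * κ * l + L ^ 2 * p))) := by
    refine (((hS.tendsto _).comp hY).mul ((hUL.const_mul (2 * κ)).add ((hU.pow 2).mul hps))).congr' ?_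
    filter_upwards with z
    simp only [Function.comp]
    rw [hT (Y z)]
    simp only [hYdef]
    ring
  have hUs : Tendsto (fun z => 2 * κ + 2 * (U z * s z)) atTop (𝓝 (2 * κ)) := by
    simpa using ((hU.mul hs0).const_mul 2).const_add (2 * κ)
  set Q : ℝ → ℝ := fun z => (m + 1) * (Y z ^ m * (2 * κ + 2 * (U z * s z)) - (2 * κ * L) ^ m * (2 * κ))
    with hQdef
  have hQ : ∃ q, Tendsto (fun z => z ^ (d - δ) * Q z) atTop (𝓝 q) := by
    refine ⟨_, (((hYm.mul hUs).add ((hU.mul hps).const_mul (2 * (2 * κ * L) ^ m))).const_mul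
      ((m : ℝ) + 1)).congr' ?_⟩
    filter_upwards with z
    simp only [hQdef]; ring
  obtain ⟨q, hQ⟩ := hQ
  have hYU : Tendsto (fun z => z ^ (d - δ) * (Y z ^ m * U z - (2 * κ * L) ^ m * L)) atTop
      (𝓝 (S (2 * κ * L) * (2 * κ * l + L ^ 2 * p) * L + (2 * κ * L) ^ m * l)) := by
    refine ((hYm.mul hU).add (hUL.const_mul ((2 * κ * L) ^ m))).congr' ?_
    filter_upwards with z
    ring
  have hP : (2 * κ * L) ^ m * (2 * κ) = δ * (δ + 1) := by
    have : (2 * κ * L) ^ m * (2 * κ) * L = δ * (δ + 1) * L := by rw [← hy0]; ring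
    exact mul_right_cancel₀ hL.ne' this
  set G : ℝ → ℝ := fun z => k2 z - l0 * ((2 - δ) * (2 - δ - 1) * z ^ (2 - δ - 2))
    - μ * (μ + 1) * (w z / z ^ 2) with hGdef
  have hGlim := ((((((hpe.mul hQ).mul hhlim).add (hQ.const_mul l0)).add
    (hYU.const_mul (2 * (m + 1) * κ3))).sub (hUL.const_mul γ)).sub (hl'.const_mul α))
  refine aux_limit μ (d - 2) _ 1 (by linarith) (by linarith) (by linarith) one_pos w
    (fun z => k1 z - l0 * ((2 - δ) * z ^ (2 - δ - 1)))
    (fun z => k2 z - l0 * ((2 - δ) * (2 - δ - 1) * z ^ (2 - δ - 2))) G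
    (fun z hz => (hk1 z (by linarith)).sub ((aux_pow_d1 (2 - δ) z (by linarith)).const_mul l0))
    (fun z hz => (hk2 z (by linarith)).sub ((aux_pow_d2 (2 - δ) z (by linarith)).const_mul l0))
    (fun z hz => by simp only [hGdef]; ring)
    (hGlim.congr' ?_) hhlim
  filter_upwards [eventually_gt_atTop 0] with z hz
  have hη : η z = z ^ (-δ) * U z := by
    simp only [hUdef]; rw [← mul_assoc, ← Real.rpow_add hz]; simp
  have hsz : z ^ (-δ) = z * s z := by
    simp only [hsdef]
    rw [show -δ = 1 + (-δ - 1) by ring, Real.rpow_add hz, Real.rpow_one]; ring_nf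
  have hF : 2 * κ * z * η z + η z ^ 2 = z ^ (1 - δ) * Y z := by
    have : z ^ (1 - δ) = z * z ^ (-δ) := by
      rw [show 1 - δ = 1 + -δ by ring, Real.rpow_add hz, Real.rpow_one]
    simp only [hYdef]
    rw [this, hη, hsz]; ring
  have hFm : (2 * κ * z * η z + η z ^ 2) ^ m = Y z ^ m / z ^ 3 := by
    rw [hF, mul_pow, ← Real.rpow_natCast (z ^ (1 - δ)), ← Real.rpow_mul hz.le,
      show (1 - δ) * (m : ℝ) = -((3 : ℕ) : ℝ) by push_cast; linear_combination -hδ,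
      Real.rpow_neg hz.le, Real.rpow_natCast]
    field_simp
  have hw : h z = w z + l0 * z ^ 2 * z ^ (-δ) := by
    simp only [hwdef]
    have : z ^ (2 - δ) = z ^ 2 * z ^ (-δ) := by
      rw [show 2 - δ = 2 + -δ by ring, Real.rpow_add hz]; norm_num
    rw [this]; ring
  have hk := hkode z hz
  rw [hFm] at hk
  have hη1 : η1 z = (η1 z - L * (-δ * z ^ (-δ - 1))) - L * δ * s z := by
    simp only [hsdef]; ring
  set v1 := η1 z - L * (-δ * z ^ (-δ - 1)) with hv1
  have hk' : k2 z = (m + 1) * (Y z ^ m / z ^ 3) * ((2 * κ * z + 2 * η z) * h z + 2 * κ3 * z ^ 3 * η z)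
      - γ * η z - α * z * η1 z := by linear_combination hk
  have e1 : z ^ (d - 2 + 2) = z ^ (d - δ) * z ^ δ := by
    rw [← Real.rpow_add hz]; ring_nf
  have e2 : z ^ (d + 1) = z ^ (d - δ) * z ^ δ * z := by
    rw [← Real.rpow_add hz, show d - δ + δ = d by ring, Real.rpow_add hz, Real.rpow_one]
  have e3 : z ^ (2 - δ - 2) = z ^ (-δ) := by ring_nf
  have e4 : z ^ (δ - 2) = z ^ δ / z ^ 2 := aux_rpow_neg_two _ _ hz
  have e5 : z ^ δ * z ^ (-δ) = 1 := by rw [← Real.rpow_add hz]; simp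
  have hGz : G z = Q z / z ^ 2 * w z + l0 * Q z * z ^ (-δ)
      + 2 * (m + 1) * κ3 * (Y z ^ m * U z - (2 * κ * L) ^ m * L) * z ^ (-δ)
      - γ * (U z - L) * z ^ (-δ) - α * z * v1 := by
    have hQz : (m + 1) * Y z ^ m * (2 * κ + 2 * (U z * s z)) = Q z + μ * (μ + 1) := by
      simp only [hQdef]; rw [hμP]; linear_combination (m + 1) * hP
    have t1 : (m + 1) * (Y z ^ m / z ^ 3) * ((2 * κ * z + 2 * η z) * h z + 2 * κ3 * z ^ 3 * η z)
        = (Q z + μ * (μ + 1)) / z ^ 2 * h z + 2 * (m + 1) * κ3 * Y z ^ m * U z * z ^ (-δ) := by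
      rw [← hQz, hη]
      have : (2 * κ * z + 2 * (z ^ (-δ) * U z)) = z * (2 * κ + 2 * (U z * s z)) := by
        rw [hsz]; ring
      rw [this]
      field_simp
    simp only [hGdef]
    rw [hk', t1, e3, hw, hη1, hη]
    have t2 : (Q z + μ * (μ + 1)) / z ^ 2 * (w z + l0 * z ^ 2 * z ^ (-δ))
       = Q z / z ^ 2 * w z + μ * (μ + 1) * (w z / z ^ 2) + l0 * (Q z + μ * (μ + 1)) * z ^ (-δ) := by
      field_simp
    rw [t2, hμP]
    linear_combination z ^ (-δ) * hid - α * L * δ * hsz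
  rw [hGz, e1, e2, e4]
  linear_combination -z ^ (d - δ) * (l0 * Q z + 2 * (m + 1) * κ3 * (Y z ^ m * U z - (2 * κ * L) ^ m * L)
      - γ * (U z - L)) * e5

lemma aux_c2 (f : ℝ → ℝ) (hf : ContDiffOn ℝ 2 f (Set.Ici 0)) :
    (∀ z > 0, HasDerivAt f (derivWithin f (Set.Ici 0) z) z) ∧
    (∀ z > 0, HasDerivAt (derivWithin f (Set.Ici 0))
      (derivWithin (derivWithin f (Set.Ici 0)) (Set.Ici 0) z) z) := by
  have hf' : ContDiffOn ℝ 1 (derivWithin f (Set.Ici 0)) (Set.Ici 0) :=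
    hf.derivWithin (uniqueDiffOn_Ici 0) (by norm_num)
  constructor
  · intro z hz
    exact ((hf.differentiableOn (by norm_num)) z (le_of_lt hz)).hasDerivWithinAt.hasDerivAt
      (Ici_mem_nhds hz)
  · intro z hz
    exact ((hf'.differentiableOn (by norm_num)) z (le_of_lt hz)).hasDerivWithinAt.hasDerivAt
      (Ici_mem_nhds hz)

lemma aux_kap_pos : 0 < kap := by
  unfold kap; have := Real.pi_pos; positivity

lemma aux_lam (m : ℕ) (hm : 3 ≤ m) : 0 < lam (m + 1) ∧
    (2 * kap * lam (m + 1)) ^ (m + 1) = del (m + 1) * (del (m + 1) + 1) * lam (m + 1) := by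
  have hk := aux_kap_pos
  have hm0 : (0:ℝ) < m := by exact_mod_cast (by omega : 0 < m)
  have hdel : 0 < del (m + 1) := by
    unfold del; push_cast; rw [add_sub_cancel_right]; positivity
  have hB : 0 < del (m + 1) * (del (m + 1) + 1) / (2 * kap) ^ (m + 1) := by positivity
  have hlam : 0 < lam (m + 1) := Real.rpow_pos_of_pos hB _
  refine ⟨hlam, ?_⟩
  have hpow : lam (m + 1) ^ m = del (m + 1) * (del (m + 1) + 1) / (2 * kap) ^ (m + 1) := by
    unfold lam
    rw [← Real.rpow_natCast, ← Real.rpow_mul hB.le]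
    push_cast
    rw [add_sub_cancel_right, one_div, inv_mul_cancel₀ hm0.ne', Real.rpow_one]
  rw [mul_pow, pow_succ (lam (m + 1)), hpow]
  field_simp

/-- Asymptotics of the corrector at infinity: for some constant λ',
z^{δ'−2}(h(z) − λ₀ z^{2−δ}) → λ' as z → ∞. -/
theorem corrector_asymptotics_at_infinity (n : ℕ) (hn : 4 ≤ n)
    (η : ℝ → ℝ) (hη : IsReactiveProfile n η)
    (h : ℝ → ℝ) (hh : IsCorrector n η h) :
    ∃ lam' : ℝ,
      Filter.Tendsto (fun z : ℝ => z ^ (delp n - 2) * (h z - lam0 n * z ^ (2 - del n)))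
        Filter.atTop (nhds lam') := by
  obtain ⟨m, rfl⟩ : ∃ m, n = m + 1 := ⟨n - 1, by omega⟩
  have hm : 3 ≤ m := by omega
  have hmR : (3:ℝ) ≤ m := by exact_mod_cast hm
  have hm0 : (m:ℝ) ≠ 0 := by linarith
  have hk := aux_kap_pos
  obtain ⟨hL, hy0⟩ := aux_lam m hm
  have hdelm : del (m + 1) = (m + 3) / m := by
    unfold del; push_cast; ring_nf
  have hδ : del (m + 1) * m = m + 3 := by rw [hdelm]; field_simp
  set δ := del (m + 1) with hδdef
  have hδ1 : 1 < δ := by rw [hdelm, lt_div_iff₀ (by linarith)]; linarith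
  have hδ2 : δ ≤ 2 := by rw [hdelm, div_le_iff₀ (by linarith)]; linarith
  have hrad : 0 ≤ 4 * ((m : ℝ) + 1) * δ * (δ + 1) + 1 := by positivity
  set μ := (Real.sqrt (4 * ((m : ℝ) + 1) * δ * (δ + 1) + 1) - 1) / 2 with hμdef
  have hμP : μ * (μ + 1) = (m + 1) * (δ * (δ + 1)) := by
    have := Real.sq_sqrt hrad
    rw [hμdef]; linear_combination this / 4
  have hμ0 : 0 ≤ μ := by
    have : 1 ≤ Real.sqrt (4 * ((m : ℝ) + 1) * δ * (δ + 1) + 1) := by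
      rw [Real.one_le_sqrt]
      have : 0 ≤ 4 * ((m : ℝ) + 1) * δ * (δ + 1) := by positivity
      linarith
    rw [hμdef]; linarith
  have hcmp : ∀ x : ℝ, 0 < x → x * (x + 1) < μ * (μ + 1) → x < μ := by
    intro x hx hh; by_contra hc; push Not at hc; nlinarith
  have hcmp' : ∀ x : ℝ, 0 < x → μ * (μ + 1) < x * (x + 1) → μ < x := by
    intro x hx hh; by_contra hc; push Not at hc; nlinarith
  have hμ : δ + 2 < μ := by
    apply hcmp _ (by linarith)
    rw [hμP]
    have : (m + 1) * (δ * (δ + 1)) = (m * δ) * (δ + 1) + δ * (δ + 1) := by ring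
    rw [this, show m * δ = (m:ℝ) + 3 by linarith]
    nlinarith
  have hd : (delp (m + 1) = μ ∧ μ < 2 * δ + 1) ∨ (delp (m + 1) = 2 * δ + 1 ∧ 2 * δ + 1 < μ) := by
    by_cases h5 : m + 1 ≤ 5
    · left
      refine ⟨by unfold delp; rw [if_pos h5, hμdef]; push_cast; rfl, ?_⟩
      apply hcmp' _ (by linarith)
      rw [hμP]
      have h4 : (m:ℝ) ≤ 4 := by exact_mod_cast (by omega : m ≤ 4)
      have : (m + 1) * (δ * (δ + 1)) = (m * δ + δ) * (δ + 1) := by ring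
      rw [this, show m * δ = (m:ℝ) + 3 by linarith]
      have h7 : (7:ℝ) / 4 ≤ δ := by rw [hdelm, le_div_iff₀ (by linarith)]; linarith
      have : (m:ℝ) + 3 + δ < 2 * (2 * δ + 1) := by
        have : m = 3 ∨ m = 4 := by omega
        rcases this with h | h
        · have : δ = 2 := by rw [hdelm, h]; norm_num
          rw [h, this]; norm_num
        · rw [h]; push_cast; linarith
      nlinarith
    · right
      refine ⟨by unfold delp; rw [if_neg h5], ?_⟩
      apply hcmp _ (by linarith)
      rw [hμP]
      have h4 : (5:ℝ) ≤ m := by exact_mod_cast (by omega : 5 ≤ m)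
      have h8 : δ ≤ 8 / 5 := by rw [hdelm, div_le_iff₀ (by linarith)]; linarith
      have : (m + 1) * (δ * (δ + 1)) = (m * δ + δ) * (δ + 1) := by ring
      rw [this, show m * δ = (m:ℝ) + 3 by linarith]
      nlinarith
  obtain ⟨hη1, hη2, hη3, hη4, hη5⟩ := hη
  obtain ⟨hh1, hh2, hh3, hh4⟩ := hh
  obtain ⟨a1, a2⟩ := aux_c2 η hη1
  obtain ⟨b1, b2⟩ := aux_c2 h hh1
  refine aux_corrector_main m kap (lam (m + 1)) δ μ (delp (m + 1)) kap3 (gam (m + 1)) (alph (m + 1))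
    (lam0 (m + 1)) hk hL hδ1 hδ2 hμ hμP hδ hy0 hd ?_ η _ _ (fun z hz => hη2 z (le_of_lt hz)) a1 a2
    (fun z hz => hη3 z (le_of_lt hz)) hη5 h _ _ b1 b2 ?_ hh4
  · have hP : (2 * kap * lam (m + 1)) ^ m = δ * (δ + 1) / (2 * kap) := by
      rw [eq_div_iff (by positivity)]
      have : (2 * kap * lam (m + 1)) ^ m * (2 * kap) * lam (m + 1) = δ * (δ + 1) * lam (m + 1) := by
        rw [← hy0]; ring
      exact mul_right_cancel₀ hL.ne' this
    rw [hP]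
    have hden : 0 < (m:ℝ) * δ * (δ + 1) + 2 * (2 * δ - 1) := by
      have : 0 < (m:ℝ) * δ * (δ + 1) := by
        have : 0 < (m:ℝ) := by linarith
        positivity
      linarith
    have hl0 : lam0 (m + 1) * ((m:ℝ) * δ * (δ + 1) + 2 * (2 * δ - 1))
        = (lam (m + 1) / (2 * kap)) *
          (-2 * ((m:ℝ) + 1) * kap3 * δ * (δ + 1) - kap * (δ - 2 * eps (m + 1))) := by
      unfold lam0
      rw [← hδdef]
      push_cast
      rw [add_sub_cancel_right]
      field_simp
    have hge : gam (m + 1) - alph (m + 1) * δ = -(δ - 2 * eps (m + 1)) / 2 := by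
      unfold alph gam eps
      rw [hdelm]
      push_cast
      rw [add_sub_cancel_right]
      have : 2 * ((m:ℝ) + 1) + 1 ≠ 0 := by positivity
      field_simp
      ring
    have hx : lam (m + 1) / (2 * kap) *
          (-2 * ((m:ℝ) + 1) * kap3 * δ * (δ + 1) - kap * (δ - 2 * eps (m + 1)))
        = -(2 * (m + 1) * kap3 * (δ * (δ + 1) / (2 * kap)) * lam (m + 1))
          + lam (m + 1) * (-(δ - 2 * eps (m + 1)) / 2) := by
      field_simp
      ring
    rw [hx, ← hge] at hl0
    linear_combination hl0
  · intro z hz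
    have := hh2 z (le_of_lt hz)
    push_cast at this
    simpa using this
end

section
/- Let n ≥ 4 be an integer, let τ, C > 0, and let v : ℝ × [τ,∞) → ℝ satisfy |v(x,t) − v_∞(x,t)| ≤ C t^{−4γ} for all x ∈ ℝ and t ≥ τ. Define the reaction front F(x,t) = (1/2)(v(x,t)² − u(x,t)²)^n. Then for every z ∈ ℝ, lim_{t→∞} t^{2nγ} F(t^α z, t) = (1/2)(2κ|z| η(|z|) + η(|z|)²)^n = (1/2) η''(|z|). -/
noncomputable def mu1 (y : ℝ) : ℝ :=
  (2 / Real.sqrt Real.pi) * ∫ σ in (0:ℝ)..(y / 2), Real.exp (-σ ^ 2)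

def IsDiffusiveProfile (n : ℕ) (μ : ℝ → ℝ) : Prop :=
  ContDiffOn ℝ 2 μ (Set.Ioi 0) ∧
  (∀ y ∈ Set.Ioi (0:ℝ), 0 < μ y) ∧
  (∀ y ∈ Set.Ioi (0:ℝ),
    deriv (deriv μ) y + y / 2 * deriv μ y + eps n * μ y = (2 * mu1 y * μ y) ^ n) ∧
  Filter.Tendsto (fun y : ℝ => y ^ del n * μ y) (nhdsWithin 0 (Set.Ioi 0)) (nhds (lam n)) ∧
  Filter.Tendsto (fun y : ℝ => y ^ (2 * eps n) * μ y) Filter.atTop (nhds 0)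

/-- u(x,t) = −erf(x/(2√t)). -/
noncomputable def uu (x t : ℝ) : ℝ := -mu1 (x / Real.sqrt t)

/-- ū(x,t) = μ₁(|x|/√t). -/
noncomputable def ubar (x t : ℝ) : ℝ := mu1 (|x| / Real.sqrt t)

/-- φ₁(z) = η(z) − λ z^{−δ}. -/
noncomputable def phi1 (n : ℕ) (η : ℝ → ℝ) (z : ℝ) : ℝ := η z - lam n * z ^ (-(del n))

/-- φ₂(z) = −λ₀ z^{2−δ} + h(z). -/
noncomputable def phi2 (n : ℕ) (h : ℝ → ℝ) (z : ℝ) : ℝ := -lam0 n * z ^ (2 - del n) + h z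

/-- μ₃(y) = μ₂(y) − λ y^{−δ}. -/
noncomputable def mu3 (n : ℕ) (μ : ℝ → ℝ) (y : ℝ) : ℝ := μ y - lam n * y ^ (-(del n))

/-- The asymptotic profile v_∞. -/
noncomputable def vInf (n : ℕ) (η μ h : ℝ → ℝ) (x t : ℝ) : ℝ :=
  mu1 (|x| / Real.sqrt t) + t ^ (-(eps n)) * μ (|x| / Real.sqrt t)
    + t ^ (-(gam n)) * phi1 n η (|x| / t ^ alph n)
    + t ^ (-(3 * gam n)) * phi2 n h (|x| / t ^ alph n)

/-- φ(x,t) = t^{−γ} η(|z|) + t^{−ε} μ₃(|y|) + t^{−3γ} φ₂(|z|). -/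
noncomputable def phiFun (n : ℕ) (η μ h : ℝ → ℝ) (x t : ℝ) : ℝ :=
  t ^ (-(gam n)) * η (|x| / t ^ alph n) + t ^ (-(eps n)) * mu3 n μ (|x| / Real.sqrt t)
    + t ^ (-(3 * gam n)) * phi2 n h (|x| / t ^ alph n)

theorem gam_is_pos (n : ℕ) : 0 < gam n := by unfold gam; positivity

theorem del_is_pos (n : ℕ) (hn : 4 ≤ n) : 0 < del n := by
  have h4 : (4:ℝ) ≤ n := by exact_mod_cast hn
  unfold del
  apply div_pos <;> linarith

theorem gam_del (n : ℕ) (hn : 4 ≤ n) : gam n * (1 + del n) = eps n := by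
  have h4 : (4:ℝ) ≤ n := by exact_mod_cast hn
  have h1 : (n:ℝ) - 1 ≠ 0 := by linarith
  have h2 : 2 * (n:ℝ) + 1 ≠ 0 := by linarith
  unfold gam del eps
  field_simp
  ring

theorem mu1_at_zero : mu1 0 = 0 := by simp [mu1]

theorem mu1_odd (y : ℝ) : mu1 (-y) = - mu1 y := by
  unfold mu1
  have := intervalIntegral.integral_comp_neg (a := 0) (b := y / 2)
    (fun σ : ℝ => Real.exp (-σ ^ 2))
  simp only [neg_sq, neg_zero] at this
  rw [this, intervalIntegral.integral_symm, neg_div]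
  ring

theorem mu1_abs_sq (y : ℝ) : mu1 |y| ^ 2 = mu1 y ^ 2 := by
  rcases abs_choice y with h | h <;> rw [h]
  rw [mu1_odd]; ring

theorem mu1_deriv : HasDerivAt mu1 kap 0 := by
  have hc : Continuous (fun σ : ℝ => Real.exp (-σ ^ 2)) := by fun_prop
  have h1 : HasDerivAt (fun u : ℝ => ∫ σ in (0:ℝ)..u, Real.exp (-σ ^ 2))
      (Real.exp (-((0:ℝ)/2) ^ 2)) ((0:ℝ) / 2) :=
    intervalIntegral.integral_hasDerivAt_right (hc.intervalIntegrable _ _)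
      (hc.stronglyMeasurableAtFilter _ _) hc.continuousAt
  have h2 : HasDerivAt (fun y : ℝ => y / 2) (1 / 2) 0 := (hasDerivAt_id (0:ℝ)).div_const 2
  have h3 := (HasDerivAt.comp (0:ℝ) h1 h2).const_mul (2 / Real.sqrt Real.pi)
  have e : kap = 2 / Real.sqrt Real.pi * (Real.exp (-((0:ℝ)/2) ^ 2) * (1 / 2)) := by
    simp [kap]; ring
  rw [e]
  exact h3

theorem tend_rpow_neg (a : ℝ) (ha : 0 < a) :
    Filter.Tendsto (fun t : ℝ => t ^ (-a)) Filter.atTop (nhdsWithin 0 (Set.Ioi 0)) := by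
  refine tendsto_nhdsWithin_iff.2 ⟨tendsto_rpow_neg_atTop ha, ?_⟩
  filter_upwards [Filter.eventually_gt_atTop 0] with t ht
  exact Real.rpow_pos_of_pos ht _

theorem tend_mu1 (n : ℕ) (w : ℝ) :
    Filter.Tendsto (fun t : ℝ => t ^ gam n * mu1 (w * t ^ (-gam n))) Filter.atTop
      (nhds (kap * w)) := by
  have h2 : HasDerivAt (fun s : ℝ => w * s) w 0 := by
    simpa using (hasDerivAt_id (0:ℝ)).const_mul w
  have h1 : HasDerivAt mu1 kap (w * 0) := by rw [mul_zero]; exact mu1_deriv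
  have h3 := (HasDerivAt.comp (0:ℝ) h1 h2).tendsto_slope_zero_right
  have h4 := h3.comp (tend_rpow_neg (gam n) (gam_is_pos n))
  refine h4.congr' ?_
  filter_upwards [Filter.eventually_gt_atTop 0] with t ht
  simp [mu1_at_zero, Real.rpow_neg ht.le]

theorem tend_mu2 (n : ℕ) (hn : 4 ≤ n) (μ : ℝ → ℝ) (hμ : IsDiffusiveProfile n μ) (w : ℝ)
    (hw : 0 ≤ w) :
    Filter.Tendsto (fun t : ℝ => t ^ gam n * (t ^ (-eps n) * μ (w * t ^ (-gam n))))
      Filter.atTop (nhds (lam n * w ^ (-del n))) := by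
  have hd := del_is_pos n hn
  have hg := gam_is_pos n
  have hgd := gam_del n hn
  rcases hw.eq_or_lt with rfl | hw
  · rw [Real.zero_rpow (by linarith)]
    have h1 := ((tend_rpow_neg (gam n * del n) (by positivity)).mono_right
      nhdsWithin_le_nhds).mul_const (μ 0)
    rw [mul_zero]
    rw [zero_mul] at h1
    refine h1.congr' ?_
    filter_upwards [Filter.eventually_gt_atTop 0] with t ht
    rw [zero_mul, ← mul_assoc, ← Real.rpow_add ht]
    congr 2
    linarith
  · have h0 : Filter.Tendsto (fun t : ℝ => w * t ^ (-gam n)) Filter.atTop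
        (nhdsWithin 0 (Set.Ioi 0)) := by
      refine tendsto_nhdsWithin_iff.2 ⟨?_, ?_⟩
      · simpa using (tendsto_rpow_neg_atTop hg).const_mul w
      filter_upwards [Filter.eventually_gt_atTop 0] with t ht
      exact mul_pos hw (Real.rpow_pos_of_pos ht _)
    have h1 := (hμ.2.2.2.1.comp h0).mul_const (w ^ (-del n))
    refine h1.congr' ?_
    filter_upwards [Filter.eventually_gt_atTop 0] with t ht
    simp only [Function.comp]
    rw [Real.mul_rpow hw.le (Real.rpow_nonneg ht.le _), ← Real.rpow_mul ht.le,
      ← mul_assoc (t ^ gam n), ← Real.rpow_add ht, Real.rpow_neg hw.le]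
    have e : gam n + -eps n = -gam n * del n := by linarith
    rw [e]
    have := (Real.rpow_pos_of_pos hw (del n)).ne'
    field_simp

/-- The reaction front on the reactive scale: for every z ∈ ℝ,
t^{2nγ} F(t^α z, t) → (1/2)(2κ|z|η(|z|) + η(|z|)²)ⁿ = (1/2)η''(|z|) as t → ∞,
where F(x,t) = (1/2)(v(x,t)² − u(x,t)²)ⁿ. -/
theorem reaction_front_reactive_scale (n : ℕ) (hn : 4 ≤ n) (η μ h : ℝ → ℝ)
    (hη : IsReactiveProfile n η) (hμ : IsDiffusiveProfile n μ) (hh : IsCorrector n η h)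
    (τ C : ℝ) (hτ : 0 < τ) (hC : 0 < C) (v : ℝ → ℝ → ℝ)
    (hv : ∀ x : ℝ, ∀ t ≥ τ, |v x t - vInf n η μ h x t| ≤ C * t ^ (-(4 * gam n)))
    (z : ℝ) :
    Filter.Tendsto
      (fun t : ℝ => t ^ (2 * (n : ℝ) * gam n) *
        ((1 : ℝ) / 2 * (v (t ^ alph n * z) t ^ 2 - uu (t ^ alph n * z) t ^ 2) ^ n))
      Filter.atTop
      (nhds ((1 : ℝ) / 2 * (2 * kap * |z| * η |z| + η |z| ^ 2) ^ n)) ∧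
    (1 : ℝ) / 2 * (2 * kap * |z| * η |z| + η |z| ^ 2) ^ n
      = 1 / 2 * derivWithin (derivWithin η (Set.Ici 0)) (Set.Ici 0) |z| := by
  refine ⟨?_, ?_⟩
  swap
  · rw [hη.2.2.1 |z| (abs_nonneg z)]
  have hg := gam_is_pos n
  have harg : ∀ t : ℝ, 0 < t → ∀ w : ℝ, t ^ alph n * w / Real.sqrt t = w * t ^ (-gam n) := by
    intro t ht w
    rw [Real.sqrt_eq_rpow, mul_comm, mul_div_assoc, ← Real.rpow_sub ht]
    congr 2
    unfold alph; ring
  have habs : ∀ t : ℝ, 0 < t → |t ^ alph n * z| = t ^ alph n * |z| := by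
    intro t ht
    rw [abs_mul, abs_of_pos (Real.rpow_pos_of_pos ht _)]
  have herr : Filter.Tendsto (fun t : ℝ => t ^ gam n * (v (t ^ alph n * z) t -
      vInf n η μ h (t ^ alph n * z) t)) Filter.atTop (nhds 0) := by
    have h1 := (tendsto_rpow_neg_atTop (y := 3 * gam n) (by positivity)).const_mul C
    rw [mul_zero] at h1
    refine squeeze_zero_norm' ?_ h1
    filter_upwards [Filter.eventually_gt_atTop 0, Filter.eventually_ge_atTop τ] with t ht htτ
    have hp := Real.rpow_pos_of_pos ht (gam n)
    rw [Real.norm_eq_abs, abs_mul, abs_of_pos hp]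
    calc _ ≤ t ^ gam n * (C * t ^ (-(4 * gam n))) :=
          mul_le_mul_of_nonneg_left (hv _ t htτ) hp.le
      _ = C * (t ^ gam n * t ^ (-(4 * gam n))) := by ring
      _ = _ := by
          rw [← Real.rpow_add ht]
          congr 2
          ring
  have hphi2 : Filter.Tendsto (fun t : ℝ => t ^ (-(2 * gam n)) * phi2 n h |z|)
      Filter.atTop (nhds 0) := by
    simpa using (tendsto_rpow_neg_atTop (y := 2 * gam n) (by positivity)).mul_const
      (phi2 n h |z|)
  have hV : Filter.Tendsto (fun t : ℝ => t ^ gam n * v (t ^ alph n * z) t) Filter.atTop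
      (nhds (kap * |z| + η |z|)) := by
    have hs := ((((tend_mu1 n |z|).add (tend_mu2 n hn μ hμ |z| (abs_nonneg z))).add_const
      (phi1 n η |z|)).add hphi2).add herr
    have e : kap * |z| + lam n * |z| ^ (-del n) + phi1 n η |z| + 0 + 0
        = kap * |z| + η |z| := by
      unfold phi1; ring
    rw [e] at hs
    refine hs.congr' ?_
    filter_upwards [Filter.eventually_gt_atTop 0] with t ht
    have hp := Real.rpow_pos_of_pos ht (gam n)
    have ha := Real.rpow_pos_of_pos ht (alph n)
    have e1 : t ^ gam n * t ^ (-gam n) = 1 := by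
      rw [← Real.rpow_add ht]; simp
    have e2 : t ^ (-(2 * gam n)) = t ^ gam n * t ^ (-(3 * gam n)) := by
      rw [← Real.rpow_add ht]; congr 1; ring
    have e3 : t ^ alph n * |z| / t ^ alph n = |z| := by field_simp
    unfold vInf
    rw [habs t ht, harg t ht, e3, e2]
    linear_combination (- phi1 n η |z|) * e1
  have hU := tend_mu1 n z
  have hF := (((hV.pow 2).sub (hU.pow 2)).pow n).const_mul ((1:ℝ) / 2)
  have e : (kap * |z| + η |z|) ^ 2 - (kap * z) ^ 2 = 2 * kap * |z| * η |z| + η |z| ^ 2 := by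
    have := sq_abs z
    linear_combination kap ^ 2 * this
  rw [e] at hF
  refine hF.congr' ?_
  filter_upwards [Filter.eventually_gt_atTop 0] with t ht
  have e1 : t ^ (2 * (n : ℝ) * gam n) = ((t ^ gam n) ^ 2) ^ n := by
    rw [← pow_mul, ← Real.rpow_natCast, ← Real.rpow_mul ht.le]
    congr 1
    push_cast; ring
  unfold uu
  rw [harg t ht, e1, mul_left_comm, ← mul_pow]
  ring_nf
end
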